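/- arXiv:2412.16109 — 5 statements merged into one kernel-verified Lean document; each statement's English description precedes it below -/
import Mathlib

section
/- Let d ≥ 1, p ∈ (1,∞), and β ∈ ℝ with β > d − p. Then for every smooth function u : ℝ^d → ℝ whose support is a compact subset of the punctured open unit ball B(0,1) ∖ {0}, one has ∫_{B(0,1)} |u(x)|^p |x|^{−(β+p)} dx ≤ (p/(β+p−d))^p ∫_{B(0,1)} |∇u(x)|^p |x|^{−β} dx. -/
open MeasureTheory Metric Set

/-!
With `h x = |u x| ^ p * ‖x‖ ^ (-(β + p))`, a compactly supported `C¹` function, integration by parts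
against each coordinate gives `∫ Dh(x) x = -d ∫ h` (`integral_fderiv_apply_self`), the divergence
theorem for the field `h(x) x`. The product rule and Euler's identity for the homogeneous weight
give `Dh(x) x = p |u|^(p-2) u Du(x) x ‖x‖^(-(β+p)) - (β + p) h(x)`, so
`(β + p - d) ∫ h ≤ p ∫ |u|^(p-1) (‖Du‖ ‖x‖) ‖x‖^(-(β+p))`.
Young's inequality, scaled by the parameter `c = (β + p - d) / p`, replaces Hölder's inequality:
`a^(p-1) b ≤ c ((1 - 1/p) a^p + (1/p) (b/c)^p)`. Once it is applied pointwise
(`fderiv_hardy_le`) and integrated, a multiple of `∫ h` is absorbed on the left, and exactly the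
constant `c^(-p)` remains.
-/

section Hardy

variable {d : ℕ}

/-- Multiplication by a power of the norm preserves smoothness (for `n = 0`, continuity) of
functions whose support stays away from the origin. -/
lemma contDiff_mul_norm_rpow {n : ℕ∞} {g : EuclideanSpace ℝ (Fin d) → ℝ}
    (hg : ContDiff ℝ n g) (h0 : (0 : EuclideanSpace ℝ (Fin d)) ∉ tsupport g) (s : ℝ) :
    ContDiff ℝ n (fun x => g x * ‖x‖ ^ s) := by
  rw [contDiff_iff_contDiffAt]
  intro x
  by_cases hx : x = 0
  · subst hx
    have h : (fun x => g x * ‖x‖ ^ s) =ᶠ[nhds 0] fun _ => 0 := by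
      filter_upwards [notMem_tsupport_iff_eventuallyEq.mp h0] with y hy
      simp [hy]
    exact contDiffAt_const.congr_of_eventuallyEq h
  · exact hg.contDiffAt.mul
      ((contDiffAt_norm ℝ hx).rpow_const_of_ne (norm_ne_zero_iff.mpr hx))

/-- The divergence theorem for the field `h(x) x`. -/
lemma integral_fderiv_apply_self {h : EuclideanSpace ℝ (Fin d) → ℝ}
    (hh : ContDiff ℝ 1 h) (hc : HasCompactSupport h) :
    Integrable (fun x => fderiv ℝ h x x) ∧ ∫ x, fderiv ℝ h x x = -(d : ℝ) * ∫ x, h x := by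
  have hD : Continuous (fderiv ℝ h) := hh.continuous_fderiv one_ne_zero
  have hDc : HasCompactSupport (fderiv ℝ h) := hc.fderiv ℝ
  have hI : ∀ i : Fin d, Integrable
      (fun x => fderiv ℝ h x (EuclideanSpace.single i 1) * x i) := by
    intro i
    refine Continuous.integrable_of_hasCompactSupport (by fun_prop) ?_
    refine hDc.mono fun x hx => ?_
    contrapose! hx
    simp_all
  have hint : Integrable h := hh.continuous.integrable_of_hasCompactSupport hc
  have hcoord : ∀ (i : Fin d) (x : EuclideanSpace ℝ (Fin d)),
      HasFDerivAt (fun y : EuclideanSpace ℝ (Fin d) => y i)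
        (EuclideanSpace.proj i : EuclideanSpace ℝ (Fin d) →L[ℝ] ℝ) x :=
    fun i x => (EuclideanSpace.proj i : EuclideanSpace ℝ (Fin d) →L[ℝ] ℝ).hasFDerivAt
  have hparts : ∀ i : Fin d,
      ∫ x, fderiv ℝ h x (EuclideanSpace.single i 1) * x i = -∫ x, h x := by
    intro i
    have h1 : ∀ x : EuclideanSpace ℝ (Fin d), h x * fderiv ℝ
        (fun y : EuclideanSpace ℝ (Fin d) => y i) x (EuclideanSpace.single i 1) = h x := by
      intro x
      rw [(hcoord i x).fderiv]
      simp
    have := integral_mul_fderiv_eq_neg_fderiv_mul_of_integrable (μ := volume)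
      (f := h) (g := fun y : EuclideanSpace ℝ (Fin d) => y i) (v := EuclideanSpace.single i 1)
      (hI i) (by simpa only [h1] using hint)
      (Continuous.integrable_of_hasCompactSupport (by have := hh.continuous; fun_prop)
        hc.mul_right)
      (fun x _ => hh.differentiable one_ne_zero x) (fun x _ => (hcoord i x).differentiableAt)
    simp only [h1] at this
    rw [this, neg_neg]
  have hsum : (fun x => fderiv ℝ h x x) =
      fun x => ∑ i : Fin d, fderiv ℝ h x (EuclideanSpace.single i 1) * x i := by
    funext x
    conv_lhs => enter [2]; rw [← (EuclideanSpace.basisFun (Fin d) ℝ).sum_repr x]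
    simp [mul_comm]
  rw [hsum]
  refine ⟨integrable_finsetSum _ fun i _ => hI i, ?_⟩
  rw [integral_finsetSum _ fun i _ => hI i]
  simp [hparts]

/-- The product rule for `|u|^p ‖x‖^s` in the radial direction. The last term is Euler's identity
for the weight, which is homogeneous of degree `s`. -/
lemma fderiv_abs_rpow_mul_norm_rpow {p : ℝ} (hp : 1 < p) (s : ℝ)
    {u : EuclideanSpace ℝ (Fin d) → ℝ} {x : EuclideanSpace ℝ (Fin d)}
    (hu : DifferentiableAt ℝ u x) (hx : x ≠ 0) :
    fderiv ℝ (fun y => |u y| ^ p * ‖y‖ ^ s) x x =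
      p * |u x| ^ (p - 2) * u x * fderiv ℝ u x x * ‖x‖ ^ s + s * (|u x| ^ p * ‖x‖ ^ s) := by
  have hn : 0 < ‖x‖ := norm_pos_iff.mpr hx
  have hline : HasDerivAt (fun t : ℝ => x + t • x) x 0 := by
    simpa using ((hasDerivAt_id (0 : ℝ)).smul_const x).const_add x
  have h1 := (hasDerivAt_abs_rpow (u x) hp).comp_hasFDerivAt x hu.hasFDerivAt
  have hd2 : DifferentiableAt ℝ (fun y : EuclideanSpace ℝ (Fin d) => ‖y‖) x :=
    (contDiffAt_norm ℝ hx (n := 1)).differentiableAt one_ne_zero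
  have hnx : fderiv ℝ (fun y : EuclideanSpace ℝ (Fin d) => ‖y‖) x x = ‖x‖ := hd2.fderiv_norm_self
  have h2 := hd2.hasFDerivAt.rpow_const (p := s) (Or.inl hn.ne')
  have h3 := (h1.mul h2).fderiv
  have h4 : ‖x‖ ^ (s - 1) * ‖x‖ = ‖x‖ ^ s := by
    rw [← Real.rpow_add_one hn.ne']; simp
  have h5 : fderiv ℝ (fun y => |u y| ^ p * ‖y‖ ^ s) x x = _ := congrArg (fun L => L x) h3
  rw [h5]
  simp [hnx]
  rw [← h4]
  ring

/-- Young's inequality for the conjugate exponents `p / (p - 1)` and `p`, with scaling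
parameter `c`. -/
lemma young_scaled {p c a b : ℝ} (hp : 1 < p) (hc : 0 < c) (ha : 0 ≤ a) (hb : 0 ≤ b) :
    a ^ (p - 1) * b ≤ c * ((1 - 1 / p) * a ^ p + 1 / p * ((1 / c) ^ p * b ^ p)) := by
  have hpq : p.HolderConjugate (p / (p - 1)) := Real.HolderConjugate.conjExponent hp
  have h := Real.young_inequality_of_nonneg (Real.rpow_nonneg ha (p - 1))
    (mul_nonneg (one_div_pos.mpr hc).le hb) hpq.symm
  rw [← Real.rpow_mul ha, Real.mul_rpow (one_div_pos.mpr hc).le hb] at h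
  have h1 : (p - 1) * (p / (p - 1)) = p := by
    have : p - 1 ≠ 0 := by linarith
    field_simp
  rw [h1] at h
  have h2 := mul_le_mul_of_nonneg_left h hc.le
  have h3 : c * (a ^ (p - 1) * (1 / c * b)) = a ^ (p - 1) * b := by field_simp
  rw [h3] at h2
  refine h2.trans (le_of_eq ?_)
  have : p - 1 ≠ 0 := by linarith
  have : p ≠ 0 := by linarith
  field_simp

/-- The pointwise form of the inequality: the radial derivative of `|u|^p ‖x‖^(-(β+p))`, estimated
by Young's inequality with parameter `c`. -/
lemma fderiv_hardy_le {p β c : ℝ} (hp : 1 < p) (hc : 0 < c)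
    {u : EuclideanSpace ℝ (Fin d) → ℝ} (hu : Differentiable ℝ u)
    (h0 : (0 : EuclideanSpace ℝ (Fin d)) ∉ tsupport u) (x : EuclideanSpace ℝ (Fin d)) :
    fderiv ℝ (fun y => |u y| ^ p * ‖y‖ ^ (-(β + p))) x x ≤
      (c * (p - 1) - (β + p)) * (|u x| ^ p * ‖x‖ ^ (-(β + p))) +
        c * (1 / c) ^ p * (‖fderiv ℝ u x‖ ^ p * ‖x‖ ^ (-β)) := by
  have hp0 : 0 < p := by linarith
  by_cases hx : x = 0
  · subst hx
    have hu0 : u 0 = 0 := image_eq_zero_of_notMem_tsupport h0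
    have hD0 : fderiv ℝ u 0 = 0 :=
      image_eq_zero_of_notMem_tsupport fun h => h0 (tsupport_fderiv_subset ℝ h)
    simp [hu0, hD0, Real.zero_rpow hp0.ne']
  have hn : 0 < ‖x‖ := norm_pos_iff.mpr hx
  rw [fderiv_abs_rpow_mul_norm_rpow hp _ (hu x) hx]
  have hw : 0 ≤ ‖x‖ ^ (-(β + p)) := Real.rpow_nonneg hn.le _
  have h1 : |u x| ^ (p - 2) * u x * fderiv ℝ u x x ≤
      |u x| ^ (p - 1) * (‖fderiv ℝ u x‖ * ‖x‖) := by
    by_cases h : u x = 0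
    · rw [h]
      simp only [mul_zero, zero_mul]
      positivity
    have h2 : |u x| ^ (p - 1) = |u x| ^ (p - 2) * |u x| := by
      rw [← Real.rpow_add_one (abs_ne_zero.mpr h)]
      congr 1
      ring
    rw [h2, mul_assoc, mul_assoc]
    refine mul_le_mul_of_nonneg_left ?_ (Real.rpow_nonneg (abs_nonneg _) _)
    refine (le_abs_self _).trans ?_
    rw [abs_mul]
    exact mul_le_mul_of_nonneg_left ((fderiv ℝ u x).le_opNorm x) (abs_nonneg _)
  have h2 := h1.trans (young_scaled hp hc (abs_nonneg (u x))
    (mul_nonneg (norm_nonneg (fderiv ℝ u x)) hn.le))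
  rw [Real.mul_rpow (norm_nonneg _) hn.le] at h2
  have h3 : ‖x‖ ^ (-β) = ‖x‖ ^ p * ‖x‖ ^ (-(β + p)) := by
    rw [← Real.rpow_add hn]
    congr 1
    ring
  rw [h3]
  have h4 := mul_le_mul_of_nonneg_left (mul_le_mul_of_nonneg_right h2 hw) hp0.le
  have h5 : p * (c * ((1 - 1 / p) * |u x| ^ p +
        1 / p * ((1 / c) ^ p * (‖fderiv ℝ u x‖ ^ p * ‖x‖ ^ p))) * ‖x‖ ^ (-(β + p))) =
      c * (p - 1) * (|u x| ^ p * ‖x‖ ^ (-(β + p))) +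
        c * (1 / c) ^ p * (‖fderiv ℝ u x‖ ^ p * (‖x‖ ^ p * ‖x‖ ^ (-(β + p)))) := by
    generalize (1 / c) ^ p = k
    field_simp
  rw [h5] at h4
  linarith

end Hardy

/-- **Hardy inequality near the singular point** (case `β > d - p`).
For every smooth `u : ℝ^d → ℝ` whose support is a compact subset of the punctured open unit
ball `B(0,1) \ {0}`, one has
`∫_{B(0,1)} |u(x)|^p |x|^{-(β+p)} dx ≤ (p/(β+p-d))^p ∫_{B(0,1)} |∇u(x)|^p |x|^{-β} dx`. -/
theorem stmt0 (d : ℕ) (hd : 1 ≤ d) (p β : ℝ) (hp : 1 < p)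
    (hβ : (d : ℝ) - p < β)
    (u : EuclideanSpace ℝ (Fin d) → ℝ) (hu : ContDiff ℝ (⊤ : ℕ∞) u)
    (hucpt : IsCompact (tsupport u))
    (husupp : tsupport u ⊆ ball (0 : EuclideanSpace ℝ (Fin d)) 1 \ {0}) :
    ∫ x in ball (0 : EuclideanSpace ℝ (Fin d)) 1, |u x| ^ p * ‖x‖ ^ (-(β + p)) ≤
      (p / (β + p - d)) ^ p *
        ∫ x in ball (0 : EuclideanSpace ℝ (Fin d)) 1, ‖fderiv ℝ u x‖ ^ p * ‖x‖ ^ (-β) := by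
  have hp0 : 0 < p := by linarith
  have hα : 0 < β + p - d := by linarith
  have h0 : (0 : EuclideanSpace ℝ (Fin d)) ∉ tsupport u := fun h => (husupp h).2 rfl
  have hu1 : ContDiff ℝ 1 u := hu.of_le (by exact_mod_cast le_top)
  have hsu : tsupport (fun x => |u x| ^ p) ⊆ tsupport u := by
    refine closure_mono fun x hx => ?_
    contrapose! hx
    simp_all [Real.zero_rpow hp0.ne']
  have hsD : tsupport (fun x => ‖fderiv ℝ u x‖ ^ p) ⊆ tsupport u := by
    refine subset_trans (closure_mono fun x hx => ?_) (tsupport_fderiv_subset ℝ (f := u))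
    contrapose! hx
    simp_all [Real.zero_rpow hp0.ne']
  have hcD : Continuous (fun x => ‖fderiv ℝ u x‖ ^ p) :=
    (hu1.continuous_fderiv one_ne_zero).norm.rpow_const fun _ => Or.inr hp0.le
  have hA1 : ContDiff ℝ 1 (fun x => |u x| ^ p * ‖x‖ ^ (-(β + p))) :=
    contDiff_mul_norm_rpow (n := 1) (hu1.norm_rpow hp) (fun h => h0 (hsu h)) _
  have hAc : HasCompactSupport (fun x => |u x| ^ p * ‖x‖ ^ (-(β + p))) :=
    HasCompactSupport.mul_right (f := fun x => |u x| ^ p)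
      (hucpt.of_isClosed_subset (isClosed_tsupport _) hsu)
  have hBint : Integrable (fun x => ‖fderiv ℝ u x‖ ^ p * ‖x‖ ^ (-β)) :=
    (contDiff_mul_norm_rpow (n := 0) (contDiff_zero.mpr hcD)
      (fun h => h0 (hsD h)) _).continuous.integrable_of_hasCompactSupport
      (HasCompactSupport.mul_right (f := fun x => ‖fderiv ℝ u x‖ ^ p)
        (hucpt.of_isClosed_subset (isClosed_tsupport _) hsD))
  have hAint := hA1.continuous.integrable_of_hasCompactSupport hAc (μ := volume)
  have hout : ∀ x, x ∉ ball (0 : EuclideanSpace ℝ (Fin d)) 1 → x ∉ tsupport u :=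
    fun x hx h => hx (husupp h).1
  rw [setIntegral_eq_integral_of_forall_compl_eq_zero (fun x hx => by
      have h : |u x| ^ p = 0 := image_eq_zero_of_notMem_tsupport (f := fun x => |u x| ^ p)
        fun h => hout x hx (hsu h)
      rw [h, zero_mul]),
    setIntegral_eq_integral_of_forall_compl_eq_zero (fun x hx => by
      have h : ‖fderiv ℝ u x‖ ^ p = 0 :=
        image_eq_zero_of_notMem_tsupport (f := fun x => ‖fderiv ℝ u x‖ ^ p)
        fun h => hout x hx (hsD h)
      rw [h, zero_mul])]
  obtain ⟨hDint, hDeq⟩ := integral_fderiv_apply_self hA1 hAc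
  have hc : 0 < (β + p - d) / p := div_pos hα hp0
  have hmono := integral_mono hDint ((hAint.const_mul _).add (hBint.const_mul _))
    (fderiv_hardy_le (β := β) hp hc (hu1.differentiable one_ne_zero) h0)
  rw [hDeq, integral_add' (hAint.const_mul _) (hBint.const_mul _), integral_const_mul,
    integral_const_mul, one_div_div] at hmono
  -- Since `c * p = β + p - d`, moving the `∫ h` terms to the left leaves `c * ∫ h` there.
  have hcp : (β + p - d) / p * p = β + p - d := div_mul_cancel₀ _ hp0.ne'
  refine le_of_mul_le_mul_left ?_ hc
  linear_combination hmono +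
    (∫ x, |u x| ^ p * ‖x‖ ^ (-(β + p))) * hcp
end

section
/- Let d ≥ 1, p ∈ (1,∞), and β ∈ ℝ with 0 ≤ β < d and d − p < β. Let R > 0 and let u : B(0,R) ∖ {0} → ℝ be continuously differentiable with ∫_{B(0,R)} |u(x)|^p |x|^{−β} dx < ∞ and A := ∫_{B(0,R)} |∇u(x)|^p |x|^{−β} dx < ∞. Then the averages (1/|B(0,ε)|) ∫_{B(0,ε)} u(x) dx converge as ε → 0⁺ to a limit L ∈ ℝ, and there exists a constant C depending only on d, p, β such that |L − (1/|B(0,ε)|) ∫_{B(0,ε)} u(x) dx|^p ≤ C ε^{β−(d−p)} A for all 0 < ε < R. -/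
open MeasureTheory Metric Set Filter

/-!
On rays the fundamental theorem of calculus gives, for `0 < δ ≤ ε < R` and `x ≠ 0` in the unit
ball, `|u (ε x) - u (δ x)| ≤ ∫_δ^ε |∇u (t x)| dt`; the ray misses the origin, so no removability
of the singularity is needed, and no connectedness either, which covers `d = 1`. Integrating over
the unit ball and exchanging the integrals (Tonelli), the difference of the averages at scales `δ`
and `ε` is at most `∫_δ^ε (mean of |∇u| over B(0,t)) dt` (`enorm_sub_le_lintegral_fderiv`,
`lintegral_enorm_sub_le`).

By Hölder, and because `|x|^{-β} ≥ t^{-β}` on `B(0,t)`, this mean is at most a constant times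
`t^{(β-d)/p} A^{1/p}` (`lintegral_unitBall_comp_smul_le`). The hypothesis `d - p < β` says exactly
that `γ = (β-d)/p + 1` is positive, so the power is integrable at `0` and the difference of the
averages is at most a constant times `ε^γ A^{1/p}`, uniformly in `δ`. Hence the averages are Cauchy
as `ε → 0⁺`, and letting `δ → 0⁺` and raising to the power `p` gives the rate
(`exists_limit_of_rpow_bound`).
-/

theorem preimage_smul_ball_zero {E : Type*} [NormedAddCommGroup E] [NormedSpace ℝ E]
    {t : ℝ} (ht : 0 < t) : (fun x : E => t • x) ⁻¹' ball 0 t = ball 0 1 := by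
  ext x
  simp only [mem_preimage, mem_ball_zero_iff, norm_smul, Real.norm_eq_abs, abs_of_pos ht]
  exact mul_lt_iff_lt_one_right ht

/-- The fundamental theorem of calculus along the ray through `x`, which avoids the origin. -/
theorem enorm_sub_le_lintegral_fderiv {E : Type*} [NormedAddCommGroup E] [NormedSpace ℝ E]
    {u : E → ℝ} {R δ ε : ℝ}
    (hu : ContDiffOn ℝ 1 u (ball (0 : E) R \ {0})) (hδ : 0 < δ) (hδε : δ ≤ ε) (hε : ε ≤ R)
    {x : E} (hx : x ∈ ball (0 : E) 1) (hx0 : x ≠ 0) :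
    ‖u (ε • x) - u (δ • x)‖ₑ ≤ ∫⁻ t in Ioc δ ε, ‖fderiv ℝ u (t • x)‖ₑ := by
  have hopen : IsOpen (ball (0 : E) R \ {0}) := isOpen_ball.sdiff isClosed_singleton
  have hmem : ∀ t ∈ Icc δ ε, t • x ∈ ball (0 : E) R \ {0} := by
    intro t ht
    have ht0 : 0 < t := hδ.trans_le ht.1
    refine ⟨?_, by simp [ht0.ne', hx0]⟩
    rw [mem_ball_zero_iff] at hx ⊢
    rw [norm_smul, Real.norm_eq_abs, abs_of_pos ht0]
    have : t ≤ R := ht.2.trans hε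
    nlinarith
  have hd : ∀ t ∈ uIcc δ ε, HasDerivAt (fun t : ℝ => u (t • x)) (fderiv ℝ u (t • x) x) t := by
    intro t ht
    rw [uIcc_of_le hδε] at ht
    have h1 : HasFDerivAt u (fderiv ℝ u (t • x)) (t • x) :=
      ((hu.contDiffAt (hopen.mem_nhds (hmem t ht))).differentiableAt (by simp)).hasFDerivAt
    have h2 : HasDerivAt (fun t : ℝ => t • x) x t := by
      simpa using (hasDerivAt_id t).smul_const x
    exact h1.comp_hasDerivAt t h2
  have hc : ContinuousOn (fun t : ℝ => fderiv ℝ u (t • x) x) (uIcc δ ε) := by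
    rw [uIcc_of_le hδε]
    exact ((hu.continuousOn_fderiv_of_isOpen hopen le_rfl).comp (by fun_prop) hmem).clm_apply
      continuousOn_const
  rw [← intervalIntegral.integral_eq_sub_of_hasDerivAt hd hc.intervalIntegrable,
    intervalIntegral.integral_of_le hδε]
  refine (enorm_integral_le_lintegral_enorm _).trans (lintegral_mono fun t => ?_)
  refine (ContinuousLinearMap.le_opENorm _ _).trans ?_
  refine mul_le_of_le_one_right' ?_
  rw [← ofReal_norm, ← ENNReal.ofReal_one]
  exact ENNReal.ofReal_le_ofReal (mem_ball_zero_iff.1 hx).le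

theorem lintegral_rpow_sub_one_le {γ δ ε : ℝ} (hγ : 0 < γ) (hδ : 0 ≤ δ) (hδε : δ ≤ ε) :
    ∫⁻ t in Ioc δ ε, ENNReal.ofReal (t ^ (γ - 1)) ≤ ENNReal.ofReal (ε ^ γ / γ) := by
  have hi : IntervalIntegrable (fun t : ℝ => t ^ (γ - 1)) volume δ ε :=
    intervalIntegral.intervalIntegrable_rpow' (by linarith)
  rw [intervalIntegrable_iff_integrableOn_Ioc_of_le hδε] at hi
  rw [← ofReal_integral_eq_lintegral_ofReal hi, ← intervalIntegral.integral_of_le hδε,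
    integral_rpow (Or.inl (by linarith)), sub_add_cancel]
  · have := Real.rpow_nonneg hδ γ
    gcongr
    linarith
  · filter_upwards [ae_restrict_mem measurableSet_Ioc] with t ht
    exact Real.rpow_nonneg (hδ.trans ht.1.le) _

section Estimates

variable {E : Type*} [NormedAddCommGroup E] [NormedSpace ℝ E] [FiniteDimensional ℝ E]
  [MeasurableSpace E] [BorelSpace E] (μ : Measure E) [μ.IsAddHaarMeasure]

theorem lintegral_unitBall_comp_smul {g : E → ENNReal} (hg : Measurable g) {t : ℝ} (ht : 0 < t) :
    ∫⁻ x in ball 0 1, g (t • x) ∂μ =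
      ENNReal.ofReal (t ^ Module.finrank ℝ E)⁻¹ * ∫⁻ x in ball 0 t, g x ∂μ := by
  have h := setLIntegral_map (μ := μ) (g := fun x : E => t • x) (f := g)
    (measurableSet_ball (x := (0 : E)) (ε := t)) hg (by fun_prop)
  rw [preimage_smul_ball_zero ht, Measure.map_addHaar_smul μ ht.ne', Measure.restrict_smul,
    lintegral_smul_measure, abs_of_nonneg (by positivity)] at h
  exact h.symm

theorem ballAverage_eq_unitBall (u : E → ℝ) {t : ℝ} (ht : 0 < t) :
    (μ (ball (0 : E) t)).toReal⁻¹ * ∫ x in ball 0 t, u x ∂μ =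
      (μ (ball (0 : E) 1)).toReal⁻¹ * ∫ x in ball 0 1, u (t • x) ∂μ := by
  rw [Measure.setIntegral_comp_smul_of_pos μ u _ ht, _root_.smul_ball ht.ne', smul_zero,
    Real.norm_eq_abs, abs_of_pos ht, mul_one, Measure.addHaar_ball_of_pos μ 0 ht,
    ENNReal.toReal_mul, ENNReal.toReal_ofReal (by positivity), smul_eq_mul, mul_inv]
  ring

/-- Scaling and Hölder's inequality bound the mean of `g` over the ball of radius `t` by the
weighted `L^p` norm of `g`; the weight `‖x‖ ^ (-β)` is at least `t ^ (-β)` on that ball. -/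
theorem lintegral_unitBall_comp_smul_le [Nontrivial E] {g : E → ENNReal} (hg : Measurable g)
    {p q β t R : ℝ} (hpq : p.HolderConjugate q) (hβ : 0 ≤ β) (ht : 0 < t) (htR : t ≤ R) :
    ∫⁻ x in ball 0 1, g (t • x) ∂μ ≤
      ENNReal.ofReal (t ^ ((β - Module.finrank ℝ E) / p)) *
        ((∫⁻ x in ball 0 R, g x ^ p * ENNReal.ofReal (‖x‖ ^ (-β)) ∂μ) ^ (1 / p) *
          μ (ball 0 1) ^ (1 / q)) := by
  have hp := hpq.pos
  have h1 := ENNReal.lintegral_mul_le_Lp_mul_Lq (μ.restrict (ball 0 1)) hpq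
    (f := fun x => g (t • x)) (g := fun _ => 1)
    (hg.comp (measurable_const_smul t)).aemeasurable aemeasurable_const
  simp only [Pi.mul_def, mul_one, ENNReal.one_rpow, lintegral_const, one_mul,
    Measure.restrict_apply MeasurableSet.univ, univ_inter] at h1
  refine h1.trans ?_
  rw [← mul_assoc]
  gcongr
  rw [lintegral_unitBall_comp_smul μ (g := fun x => g x ^ p) (hg.pow_const p) ht]
  have h2 : ENNReal.ofReal (t ^ (-β)) * ∫⁻ x in ball 0 t, g x ^ p ∂μ ≤
      ∫⁻ x in ball 0 R, g x ^ p * ENNReal.ofReal (‖x‖ ^ (-β)) ∂μ := by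
    rw [← lintegral_const_mul _ (hg.pow_const p)]
    refine le_trans ?_ (lintegral_mono_set (ball_subset_ball htR))
    refine lintegral_mono_ae ?_
    filter_upwards [ae_restrict_mem measurableSet_ball,
      ae_restrict_of_ae (Measure.ae_ne μ (0 : E))] with x hx hx0
    rw [mul_comm]
    refine mul_le_mul_right (ENNReal.ofReal_le_ofReal ?_) _
    exact Real.rpow_le_rpow_of_nonpos (norm_pos_iff.2 hx0) (mem_ball_zero_iff.1 hx).le
      (neg_nonpos.2 hβ)
  have h3 : ENNReal.ofReal (t ^ Module.finrank ℝ E)⁻¹ =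
      ENNReal.ofReal (t ^ (β - Module.finrank ℝ E)) * ENNReal.ofReal (t ^ (-β)) := by
    rw [← ENNReal.ofReal_mul (by positivity), ← Real.rpow_add ht, ← Real.rpow_natCast,
      ← Real.rpow_neg ht.le]
    congr 2; ring
  rw [h3, mul_assoc, ENNReal.mul_rpow_of_nonneg _ _ (by positivity)]
  gcongr ?_ * ?_
  · rw [ENNReal.ofReal_rpow_of_nonneg (by positivity) (by positivity), ← Real.rpow_mul ht.le,
      mul_one_div]
  · gcongr

/-- The oscillation between the rescalings of `u` to scales `δ` and `ε`, in mean over the unit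
ball. Since `γ > 0`, the bound is uniform in `δ` and tends to `0` with `ε`. -/
theorem lintegral_enorm_sub_le [Nontrivial E] {u : E → ℝ} {p q β γ R δ ε : ℝ}
    (hpq : p.HolderConjugate q) (hβ : 0 ≤ β)
    (hγ : γ = (β - Module.finrank ℝ E) / p + 1) (hγ0 : 0 < γ)
    (hu : ContDiffOn ℝ 1 u (ball (0 : E) R \ {0})) (hδ : 0 < δ) (hδε : δ ≤ ε) (hε : ε ≤ R) :
    ∫⁻ x in ball 0 1, ‖u (ε • x) - u (δ • x)‖ₑ ∂μ ≤
      ENNReal.ofReal (ε ^ γ / γ) *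
        ((∫⁻ x in ball 0 R, ‖fderiv ℝ u x‖ₑ ^ p * ENNReal.ofReal (‖x‖ ^ (-β)) ∂μ) ^ (1 / p) *
          μ (ball 0 1) ^ (1 / q)) := by
  have hm : Measurable fun x : E => ‖fderiv ℝ u x‖ₑ := (measurable_fderiv ℝ u).enorm
  calc ∫⁻ x in ball 0 1, ‖u (ε • x) - u (δ • x)‖ₑ ∂μ
      ≤ ∫⁻ x in ball 0 1, (∫⁻ t in Ioc δ ε, ‖fderiv ℝ u (t • x)‖ₑ) ∂μ := by
        refine lintegral_mono_ae ?_
        filter_upwards [ae_restrict_mem measurableSet_ball,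
          ae_restrict_of_ae (Measure.ae_ne μ (0 : E))] with x hx hx0
        exact enorm_sub_le_lintegral_fderiv hu hδ hδε hε hx hx0
    _ = ∫⁻ t in Ioc δ ε, ∫⁻ x in ball 0 1, ‖fderiv ℝ u (t • x)‖ₑ ∂μ := by
        refine lintegral_lintegral_swap (Measurable.aemeasurable ?_)
        exact hm.comp (measurable_snd.smul measurable_fst)
    _ ≤ ∫⁻ t in Ioc δ ε, ENNReal.ofReal (t ^ (γ - 1)) *
        ((∫⁻ x in ball 0 R, ‖fderiv ℝ u x‖ₑ ^ p * ENNReal.ofReal (‖x‖ ^ (-β)) ∂μ) ^ (1 / p) *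
          μ (ball 0 1) ^ (1 / q)) := by
        refine setLIntegral_mono' measurableSet_Ioc fun t ht => ?_
        have h := lintegral_unitBall_comp_smul_le μ hm hpq hβ (hδ.trans ht.1) (ht.2.trans hε)
        rwa [show (β - Module.finrank ℝ E) / p = γ - 1 by linarith] at h
    _ ≤ _ := by
        rw [lintegral_mul_const _ (by fun_prop)]
        gcongr
        exact lintegral_rpow_sub_one_le hγ0 hδ.le hδε

/-- The weight is bounded below on the ball, so the weighted `L^p` bound on `u` makes `u`
integrable there and its ball averages genuine. -/
theorem integrableOn_ball_of_weighted [Nontrivial E] {u : E → ℝ} {p β R : ℝ} (hp : 1 ≤ p)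
    (hβ : 0 ≤ β) (hu : ContinuousOn u (ball (0 : E) R \ {0}))
    (hi : IntegrableOn (fun x => |u x| ^ p * ‖x‖ ^ (-β)) (ball (0 : E) R) μ) :
    IntegrableOn u (ball (0 : E) R) μ := by
  have hm : AEStronglyMeasurable u (μ.restrict (ball (0 : E) R)) := by
    have h := hu.aestronglyMeasurable (μ := μ) (measurableSet_ball.diff (measurableSet_singleton _))
    rwa [Measure.restrict_congr_set (sdiff_null_ae_eq_self (measure_singleton (0 : E)))] at h
  have hg : Integrable (fun x => 1 + R ^ β * (|u x| ^ p * ‖x‖ ^ (-β)))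
      (μ.restrict (ball (0 : E) R)) :=
    (integrableOn_const measure_ball_lt_top.ne).add (hi.const_mul (R ^ β))
  refine hg.mono' hm ?_
  filter_upwards [ae_restrict_mem measurableSet_ball,
    ae_restrict_of_ae (Measure.ae_ne μ (0 : E))] with x hx hx0
  have hx' := norm_pos_iff.2 hx0
  have hxR := mem_ball_zero_iff.1 hx
  have h0 : 0 ≤ |u x| ^ p := by positivity
  have h1 : |u x| ≤ 1 + |u x| ^ p := by
    rcases le_total |u x| 1 with h | h
    · linarith
    · have := Real.rpow_le_rpow_of_exponent_le h hp
      rw [Real.rpow_one] at this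
      linarith
  have h2 : 1 ≤ R ^ β * ‖x‖ ^ (-β) := by
    rw [Real.rpow_neg hx'.le, ← div_eq_mul_inv, one_le_div (by positivity)]
    exact Real.rpow_le_rpow hx'.le hxR.le hβ
  rw [Real.norm_eq_abs]
  nlinarith [mul_le_mul_of_nonneg_left h2 h0]

end Estimates

/-- A real function on `(0, R)` whose oscillation is controlled by a power of the scale
converges at `0⁺`, at the same rate. -/
theorem exists_limit_of_rpow_bound {m : ℝ → ℝ} {γ K R : ℝ} (hR : 0 < R) (hγ : 0 < γ)
    (h : ∀ δ ε, 0 < δ → δ ≤ ε → ε < R → |m ε - m δ| ≤ K * ε ^ γ) :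
    ∃ L, Tendsto m (nhdsWithin 0 (Ioi 0)) (nhds L) ∧
      ∀ ε ∈ Ioo (0 : ℝ) R, |L - m ε| ≤ K * ε ^ γ := by
  have hlim : Tendsto (fun ε : ℝ => K * ε ^ γ) (nhdsWithin 0 (Ioi 0)) (nhds 0) := by
    have : ContinuousAt (fun ε : ℝ => K * ε ^ γ) 0 :=
      continuousAt_const.mul (Real.continuousAt_rpow_const 0 γ (Or.inr hγ.le))
    have h0 := this.tendsto
    simp only [Real.zero_rpow hγ.ne', mul_zero] at h0
    exact h0.mono_left nhdsWithin_le_nhds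
  have hc : Cauchy (map m (nhdsWithin 0 (Ioi 0))) := by
    rw [Metric.cauchy_iff]
    refine ⟨inferInstance, fun η hη => ?_⟩
    obtain ⟨r, hrη, hr⟩ := ((hlim.eventually (gt_mem_nhds (half_pos hη))).and
      (Ioo_mem_nhdsGT hR)).exists
    have hball : ∀ s ∈ Ioc 0 r, |m r - m s| < η / 2 := fun s hs =>
      (h s r hs.1 hs.2 hr.2).trans_lt hrη
    refine ⟨m '' Ioc 0 r, image_mem_map (Ioc_mem_nhdsGT hr.1), ?_⟩
    rintro _ ⟨s, hs, rfl⟩ _ ⟨t, ht, rfl⟩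
    have h1 := abs_lt.1 (hball s hs)
    have h2 := abs_lt.1 (hball t ht)
    rw [Real.dist_eq, abs_lt]
    constructor <;> linarith
  obtain ⟨L, hL⟩ := cauchy_map_iff_exists_tendsto.1 hc
  refine ⟨L, hL, fun ε hε => ?_⟩
  refine le_of_tendsto (hL.sub_const (m ε)).abs ?_
  filter_upwards [Ioc_mem_nhdsGT hε.1] with δ hδ
  rw [abs_sub_comm]
  exact h δ ε hδ.1 hδ.2 hε.2

/-- **Lebesgue point property at the singular point.** Let `0 ≤ β < d` and `d - p < β`.
There is a constant `C = C(d,p,β)` such that for every `R > 0` and every `C¹` function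
`u` on `B(0,R) \ {0}` with `∫_{B(0,R)} |u|^p |x|^{-β} dx < ∞` and
`A := ∫_{B(0,R)} |∇u|^p |x|^{-β} dx < ∞`, the ball averages of `u` at `0` converge to some
limit `L` as `ε → 0⁺`, with `|L - avg_ε|^p ≤ C ε^{β-(d-p)} A` for all `0 < ε < R`. -/
theorem stmt3 (d : ℕ) (hd : 1 ≤ d) (p β : ℝ) (hp : 1 < p)
    (hβ0 : 0 ≤ β) (hβd : β < (d : ℝ)) (hβp : (d : ℝ) - p < β) :
    ∃ C : ℝ, 0 < C ∧
      ∀ (R : ℝ), 0 < R → ∀ u : EuclideanSpace ℝ (Fin d) → ℝ,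
        ContDiffOn ℝ 1 u (ball (0 : EuclideanSpace ℝ (Fin d)) R \ {0}) →
        IntegrableOn (fun x => |u x| ^ p * ‖x‖ ^ (-β))
          (ball (0 : EuclideanSpace ℝ (Fin d)) R) →
        IntegrableOn
          (fun x =>
            ‖fderivWithin ℝ u (ball (0 : EuclideanSpace ℝ (Fin d)) R \ {0}) x‖ ^ p *
              ‖x‖ ^ (-β))
          (ball (0 : EuclideanSpace ℝ (Fin d)) R) →
        ∃ L : ℝ,
          Tendsto
            (fun ε : ℝ =>
              (volume (ball (0 : EuclideanSpace ℝ (Fin d)) ε)).toReal⁻¹ *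
                ∫ x in ball (0 : EuclideanSpace ℝ (Fin d)) ε, u x)
            (nhdsWithin 0 (Set.Ioi 0)) (nhds L) ∧
          ∀ ε ∈ Set.Ioo (0 : ℝ) R,
            |L - (volume (ball (0 : EuclideanSpace ℝ (Fin d)) ε)).toReal⁻¹ *
                ∫ x in ball (0 : EuclideanSpace ℝ (Fin d)) ε, u x| ^ p ≤
              C * ε ^ (β - ((d : ℝ) - p)) *
                ∫ x in ball (0 : EuclideanSpace ℝ (Fin d)) R,
                  ‖fderivWithin ℝ u (ball (0 : EuclideanSpace ℝ (Fin d)) R \ {0}) x‖ ^ p *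
                    ‖x‖ ^ (-β) := by
  obtain ⟨q, hpq⟩ : ∃ q, p.HolderConjugate q := ⟨_, Real.HolderConjugate.conjExponent hp⟩
  have hp0 : 0 < p := hpq.pos
  have : Nonempty (Fin d) := ⟨⟨0, hd⟩⟩
  have hfin : Module.finrank ℝ (EuclideanSpace ℝ (Fin d)) = d := by simp
  obtain ⟨γ, hγ⟩ : ∃ γ : ℝ, γ = (β - d) / p + 1 := ⟨_, rfl⟩
  have hγp : γ * p = β - (d - p) := by rw [hγ]; field_simp; ring
  have hγ0 : 0 < γ := by
    by_contra! hneg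
    nlinarith
  set ω : ℝ := (volume (ball (0 : EuclideanSpace ℝ (Fin d)) 1)).toReal with hω
  have hω0 : 0 < ω :=
    ENNReal.toReal_pos (measure_ball_pos volume _ one_pos).ne' measure_ball_lt_top.ne
  set K : ℝ := ω⁻¹ * (ω ^ (1 / q) / γ) with hK
  have hK0 : 0 < K := by positivity
  refine ⟨K ^ p, by positivity, fun R hR u hu hui hDi => ?_⟩
  set Ω := ball (0 : EuclideanSpace ℝ (Fin d)) R \ {0} with hΩ
  have hΩo : IsOpen Ω := isOpen_ball.sdiff isClosed_singleton
  set A : ℝ := ∫ x in ball (0 : EuclideanSpace ℝ (Fin d)) R,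
    ‖fderivWithin ℝ u Ω x‖ ^ p * ‖x‖ ^ (-β) with hA
  have hA0 : 0 ≤ A := integral_nonneg fun x => by positivity
  have hAeq : ∫⁻ x in ball (0 : EuclideanSpace ℝ (Fin d)) R,
      ‖fderiv ℝ u x‖ₑ ^ p * ENNReal.ofReal (‖x‖ ^ (-β)) = ENNReal.ofReal A := by
    rw [hA, ofReal_integral_eq_lintegral_ofReal hDi (ae_of_all _ fun x => by positivity)]
    refine lintegral_congr_ae ?_
    filter_upwards [ae_restrict_mem measurableSet_ball,
      ae_restrict_of_ae (Measure.ae_ne volume (0 : EuclideanSpace ℝ (Fin d)))] with x hx hx0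
    rw [fderivWithin_of_isOpen hΩo ⟨hx, hx0⟩, ENNReal.ofReal_mul (by positivity),
      ← ENNReal.ofReal_rpow_of_nonneg (norm_nonneg _) hp0.le, ofReal_norm]
  have hint := integrableOn_ball_of_weighted volume hp.le hβ0 hu.continuousOn hui
  have hscale : ∀ t, 0 < t → t ≤ R →
      IntegrableOn (fun x => u (t • x)) (ball (0 : EuclideanSpace ℝ (Fin d)) 1) := by
    intro t ht htR
    have h := (hint.mono_set (ball_subset_ball htR)).integrable_indicator measurableSet_ball
    have h2 := h.comp_smul ht.ne'
    rw [← integrable_indicator_iff measurableSet_ball, ← preimage_smul_ball_zero ht]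
    exact h2
  obtain ⟨L, hL, hb⟩ := exists_limit_of_rpow_bound (K := K * A ^ (1 / p)) (γ := γ)
    (m := fun ε : ℝ => (volume (ball (0 : EuclideanSpace ℝ (Fin d)) ε)).toReal⁻¹ *
      ∫ x in ball (0 : EuclideanSpace ℝ (Fin d)) ε, u x) hR hγ0 (by
    intro δ ε hδ hδε hε
    have hε0 : 0 < ε := hδ.trans_le hδε
    simp only [ballAverage_eq_unitBall volume u hδ, ballAverage_eq_unitBall volume u hε0]
    rw [← mul_sub, ← integral_sub (hscale ε hε0 hε.le) (hscale δ hδ (hδε.trans hε.le)),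
      abs_mul, abs_of_pos (inv_pos.2 hω0)]
    have h := (enorm_integral_le_lintegral_enorm _).trans
      (lintegral_enorm_sub_le volume hpq hβ0 (by rw [hfin, hγ]) hγ0 hu hδ hδε hε.le)
    rw [hAeq, ← ENNReal.ofReal_toReal (measure_ball_lt_top (μ := volume)
        (x := (0 : EuclideanSpace ℝ (Fin d))) (r := 1)).ne, ← hω,
      ENNReal.ofReal_rpow_of_nonneg hA0 (by positivity),
      ENNReal.ofReal_rpow_of_nonneg hω0.le (by have := hpq.symm.pos; positivity),
      ← ENNReal.ofReal_mul (by positivity), ← ENNReal.ofReal_mul (by positivity),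
      ← ofReal_norm, ENNReal.ofReal_le_ofReal_iff (by positivity), Real.norm_eq_abs] at h
    calc _ ≤ ω⁻¹ * _ := mul_le_mul_of_nonneg_left h (inv_pos.2 hω0).le
      _ = _ := by rw [hK]; ring)
  refine ⟨L, hL, fun ε hε => ?_⟩
  refine (Real.rpow_le_rpow (abs_nonneg _) (hb ε hε) hp0.le).trans_eq ?_
  have hε0 := hε.1
  rw [Real.mul_rpow (by positivity) (by positivity), Real.mul_rpow hK0.le (by positivity),
    ← Real.rpow_mul hA0, ← Real.rpow_mul hε0.le, one_div_mul_cancel hp0.ne', Real.rpow_one, hγp]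
  ring
end

section
/- Assume the domain and weight setting below with d ≥ 1, p ∈ (1,∞), and β ∈ ℝ. Let 0 < δ₁ ≤ δ₂ < 1/(3κ₀²κ₁). Then for every measurable function u : Ω → ℝ (with both sides possibly +∞): ((1−δ₂)/(2(1+δ₂)))^{(d+p)/p} · ((1−κ₀κ₁δ₂)/(1+κ₀κ₁δ₂))^{|β|/p} · [u]_{𝔚^p[δ₂](Ω;β)} ≤ [u]_{𝔚^p[δ₁](Ω;β)} ≤ (δ₂/δ₁)^{(d+p)/p} · [u]_{𝔚^p[δ₂](Ω;β)}. -/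
/-!
The upper bound is pointwise: the ball of radius `δ₁ η(x)` lies in the one of radius `δ₂ η(x)`, and
the normalizing powers differ by the constant `(δ₂ / δ₁) ^ (d + p)` (`kern_le_kern`).

For the lower bound write `y = x + h` and put `n = ⌈δ₂ / (δ₁ (1 - δ₂))⌉`. The increment
`u (x + h) - u x` telescopes over the points `w i = x + (i / n) h`, `0 ≤ i ≤ n`. Since `η` is
1-Lipschitz, `η (w i)` lies between `(1 - δ₂) η(x)` and `(1 + δ₂) η(x)`, so each step `h / n`
based at `w i` is admissible for the horizon `δ₁`. Since `Γ ⊆ ∂Ω`, `η ≤ κ₀ γ`, hence `γ` varies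
by a factor between `1 - κ₀ κ₁ δ₂` and `1 + κ₀ κ₁ δ₂` along the segment. Jensen's inequality for
the `n` steps gives the pointwise bound `kern_le_sum`. Integrating it and using the linear change
of variables `(x, h) ↦ (x + (i / n) h, h / n)`, whose determinant is `n⁻ᵈ`
(`lintegral_kern_shear`), each step reproduces the energy with horizon `δ₁`. The total power of
`n` is `n ^ (d + p)`, and `n ≤ 2 δ₂ / (δ₁ (1 - δ₂))` makes `δ₁` disappear from the constant.
-/

open MeasureTheory Metric Set Filter
open scoped ENNReal NNReal Topology

noncomputable section

/-- Euclidean space `ℝ^d`. -/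
abbrev Euc (d : ℕ) : Type := EuclideanSpace ℝ (Fin d)

/-- The constant `C̄_{d,p} = √π Γ((d+p)/2) / (Γ((p+1)/2) Γ(d/2))`. -/
def Cbar (d : ℕ) (p : ℝ) : ℝ :=
  Real.sqrt Real.pi * Real.Gamma (((d : ℝ) + p) / 2) /
    (Real.Gamma ((p + 1) / 2) * Real.Gamma ((d : ℝ) / 2))

/-- The surface measure `σ(𝕊^{d-1}) = 2 π^{d/2} / Γ(d/2)` of the unit sphere in `ℝ^d`. -/
def sphArea (d : ℕ) : ℝ := 2 * Real.pi ^ ((d : ℝ) / 2) / Real.Gamma ((d : ℝ) / 2)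

/-- The normalizing constant `C̄_{d,p} (d+p) / σ(𝕊^{d-1})` of the nonlocal seminorm. -/
def normC (d : ℕ) (p : ℝ) : ℝ := Cbar d p * ((d : ℝ) + p) / sphArea d

/-- The distance `η(x) = dist(x, ∂Ω)` to the boundary of `Ω`. -/
def etaD {d : ℕ} (Ω : Set (Euc d)) (x : Euc d) : ℝ := Metric.infDist x (frontier Ω)

/-- The `p`-th power `[u]_{𝔚^p[δ](Ω;β)}^p` of the weighted nonlocal seminorm. -/
def nlEnergy (d : ℕ) (Ω : Set (Euc d)) (γ : Euc d → ℝ) (p β δ : ℝ) (u : Euc d → ℝ) : ℝ≥0∞ :=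
  ENNReal.ofReal (normC d p) *
    ∫⁻ x in Ω, ∫⁻ y in ball x (δ * etaD Ω x),
      ENNReal.ofReal (γ x ^ (-β) * |u y - u x| ^ p / (δ * etaD Ω x) ^ ((d : ℝ) + p))

/-- The weighted nonlocal seminorm `[u]_{𝔚^p[δ](Ω;β)}`. -/
def semiW (d : ℕ) (Ω : Set (Euc d)) (γ : Euc d → ℝ) (p β δ : ℝ) (u : Euc d → ℝ) : ℝ≥0∞ :=
  nlEnergy d Ω γ p β δ u ^ (1 / p)

/-! ### The kernel in the variables `x` and `h` -/

/-- The integrand of the seminorm in the variables `x` and `h = y - x`, extended by zero outside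
the set of admissible pairs `x ∈ Ω`, `‖h‖ < δ η(x)`. -/
def kern (d : ℕ) (Ω : Set (Euc d)) (g : Euc d → ℝ) (p β δ : ℝ) (u : Euc d → ℝ) :
    Euc d × Euc d → ℝ≥0∞ :=
  {q : Euc d × Euc d | q.1 ∈ Ω ∧ ‖q.2‖ < δ * etaD Ω q.1}.indicator
    (fun q => ENNReal.ofReal
      (g q.1 ^ (-β) * |u (q.1 + q.2) - u q.1| ^ p / (δ * etaD Ω q.1) ^ ((d : ℝ) + p)))

section Kernel

variable {d : ℕ} {Ω : Set (Euc d)} {g u : Euc d → ℝ} {p β δ : ℝ}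

lemma continuous_etaD : Continuous (etaD Ω) := continuous_infDist_pt _

lemma measurable_kern (hΩ : IsOpen Ω) (hg : Measurable g) (hu : Measurable u) :
    Measurable (kern d Ω g p β δ u) := by
  have hη : Measurable (etaD Ω) := continuous_etaD.measurable
  refine Measurable.indicator ?_ ?_
  · fun_prop
  · refine (hΩ.measurableSet.preimage measurable_fst).inter ?_
    exact measurableSet_lt measurable_snd.norm ((hη.comp measurable_fst).const_mul δ)

/-- Tonelli's theorem and the translation `y = x + h`. -/
lemma nlEnergy_eq_kern (hΩ : IsOpen Ω) (hg : Measurable g) (hu : Measurable u)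
    {γ : Euc d → ℝ} (hγ : EqOn γ g Ω) :
    nlEnergy d Ω γ p β δ u =
      ENNReal.ofReal (normC d p) * ∫⁻ h, ∫⁻ x, kern d Ω g p β δ u (x, h) := by
  unfold nlEnergy
  congr 1
  rw [← lintegral_lintegral_swap (f := fun x h => kern d Ω g p β δ u (x, h))
    (measurable_kern hΩ hg hu).aemeasurable, ← lintegral_indicator hΩ.measurableSet]
  refine lintegral_congr fun x => ?_
  by_cases hx : x ∈ Ω
  · rw [indicator_of_mem hx, ← lintegral_indicator measurableSet_ball,
      ← lintegral_add_left_eq_self _ x]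
    refine lintegral_congr fun h => ?_
    by_cases hh : ‖h‖ < δ * etaD Ω x
    · rw [indicator_of_mem (by simpa using hh), kern, indicator_of_mem (by exact ⟨hx, hh⟩), hγ hx]
    · rw [indicator_of_notMem (by simpa using hh), kern,
        indicator_of_notMem (fun H => hh H.2)]
  · rw [indicator_of_notMem hx]
    symm
    rw [lintegral_eq_zero_iff' (by exact ((measurable_kern hΩ hg hu).comp
      measurable_prodMk_left).aemeasurable)]
    exact Eventually.of_forall fun h => indicator_of_notMem (fun H => hx H.1) _

/-- The map `(x, h) ↦ (x + s h, h / n)` is linear with determinant `n⁻ᵈ`. -/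
lemma lintegral_kern_shear (hΩ : IsOpen Ω) (hg : Measurable g) (hu : Measurable u)
    (s : ℝ) {n : ℕ} (hn : 0 < n) :
    ∫⁻ h, ∫⁻ x, kern d Ω g p β δ u (x + s • h, (n : ℝ)⁻¹ • h) =
      ENNReal.ofReal ((n : ℝ) ^ d) * ∫⁻ h, ∫⁻ x, kern d Ω g p β δ u (x, h) := by
  have hn' : (0 : ℝ) < n := by exact_mod_cast hn
  have hm : Measurable fun h => ∫⁻ x, kern d Ω g p β δ u (x, h) :=
    (measurable_kern hΩ hg hu).lintegral_prod_left'
  calc _ = ∫⁻ h, (fun k => ∫⁻ x, kern d Ω g p β δ u (x, k)) ((n : ℝ)⁻¹ • h) :=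
        lintegral_congr fun h => lintegral_add_right_eq_self
          (fun x => kern d Ω g p β δ u (x, (n : ℝ)⁻¹ • h)) (s • h)
    _ = _ := by
        rw [← lintegral_map hm (by fun_prop), Measure.map_addHaar_smul _ (by positivity),
          lintegral_smul_measure, finrank_euclideanSpace, Fintype.card_fin, ← inv_pow, inv_inv,
          abs_of_nonneg (by positivity), smul_eq_mul]

end Kernel

/-! ### Geometry of `Ω` and variation of the weight -/

section Geometry

variable {d : ℕ} {Ω : Set (Euc d)}

lemma ball_etaD_subset (hΩ : IsOpen Ω) {x : Euc d} (hx : x ∈ Ω) : ball x (etaD Ω x) ⊆ Ω := by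
  by_cases hpos : 0 < etaD Ω x
  swap
  · rw [ball_eq_empty.2 (not_lt.1 hpos)]; exact empty_subset _
  refine (convex_ball x _).isPreconnected.subset_of_closure_inter_subset hΩ
    ⟨x, mem_ball_self hpos, hx⟩ ?_
  rintro y ⟨hyc, hyb⟩
  by_contra hy
  exact disjoint_left.1 disjoint_ball_infDist hyb ⟨hyc, by rwa [hΩ.interior_eq]⟩

lemma etaD_pos (hΩ : IsOpen Ω) (hne : (frontier Ω).Nonempty) {x : Euc d} (hx : x ∈ Ω) :
    0 < etaD Ω x := by
  refine (isClosed_frontier.notMem_iff_infDist_pos hne).1 fun h => ?_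
  exact (hΩ.inter_frontier_eq ▸ (⟨hx, h⟩ : x ∈ Ω ∩ frontier Ω) : x ∈ (∅ : Set (Euc d)))

lemma etaD_le_add (x y : Euc d) : etaD Ω x ≤ etaD Ω y + ‖x - y‖ := by
  rw [← dist_eq_norm]; exact infDist_le_infDist_add_dist

/-- The points of `Γ` are limits of points of `Ωstar \ Γ` because Euclidean space of positive
dimension has no isolated points. -/
lemma subset_frontier_diff (hd : 1 ≤ d) {Ωstar Γ : Set (Euc d)} (hΩ : IsOpen Ωstar)
    (hΓ : Γ.Finite) (hsub : Γ ⊆ closure Ωstar) : Γ ⊆ frontier (Ωstar \ Γ) := by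
  intro x hx
  have : Nonempty (Fin d) := ⟨⟨0, hd⟩⟩
  have hdense : Dense (univ \ Γ) := dense_univ.sdiff_finite hΓ
  refine ⟨?_, fun h => (interior_subset h).2 hx⟩
  have h1 := closure_minimal (hdense.open_subset_closure_inter hΩ) isClosed_closure (hsub hx)
  refine closure_mono ?_ h1
  rintro y ⟨hy, -, hy'⟩
  exact ⟨hy, hy'⟩

end Geometry

/-- Comparability of the weight at two points where `γ` takes the values `X` and `Y`. -/
lemma weight_le {t X Y β : ℝ} (ht0 : 0 ≤ t) (ht1 : t < 1) (hX : 0 < X)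
    (h1 : (1 - t) * X ≤ Y) (h2 : Y ≤ (1 + t) * X) :
    ((1 - t) / (1 + t)) ^ |β| * X ^ (-β) ≤ Y ^ (-β) := by
  have ht : 0 < 1 - t := by linarith
  have hb : 0 < (1 - t) / (1 + t) := by positivity
  have hY : 0 < Y := lt_of_lt_of_le (by positivity) h1
  have hb1 : (1 - t) / (1 + t) * Y ≤ X := by
    rw [div_mul_eq_mul_div, div_le_iff₀ (by positivity)]
    nlinarith
  have hb2 : (1 - t) / (1 + t) * X ≤ Y := by
    refine le_trans ?_ h1
    gcongr
    exact div_le_self ht.le (by linarith)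
  rcases le_total 0 β with hβ | hβ
  · rw [abs_of_nonneg hβ, Real.rpow_neg hX.le, Real.rpow_neg hY.le, ← div_eq_mul_inv,
      div_le_iff₀ (by positivity), inv_mul_eq_div, le_div_iff₀ (by positivity),
      ← Real.mul_rpow hb.le hY.le]
    exact Real.rpow_le_rpow (by positivity) hb1 hβ
  · rw [abs_of_nonpos hβ, ← Real.mul_rpow hb.le hX.le]
    exact Real.rpow_le_rpow (by positivity) hb2 (by linarith)

/-- Jensen's inequality for a telescoping sum over `n` steps. -/
lemma abs_telescope_rpow_le (f : ℕ → ℝ) (n : ℕ) {p : ℝ} (hp : 1 ≤ p) :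
    |f n - f 0| ^ p ≤ (n : ℝ) ^ (p - 1) * ∑ i ∈ Finset.range n, |f (i + 1) - f i| ^ p := by
  have h := Real.rpow_sum_le_const_mul_sum_rpow (Finset.range n) (fun i => f (i + 1) - f i) hp
  rw [Finset.card_range] at h
  refine le_trans (Real.rpow_le_rpow (abs_nonneg _) ?_ (by linarith)) h
  rw [← Finset.sum_range_sub]
  exact Finset.abs_sum_le_sum_abs _ _

/-! ### Pointwise comparison of kernels -/

/-- The pointwise inequality behind the lower bound: a long increment `h` based at `x` is split
into `n` increments `h / n` based at the points `x + (i / n) h`, each of which is admissible for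
the smaller horizon `δ₁`. -/
lemma kern_le_sum {d : ℕ} {Ω : Set (Euc d)} {g u : Euc d → ℝ} {p β δ₁ δ₂ t : ℝ} {n : ℕ}
    (hΩ : IsOpen Ω) (hne : (frontier Ω).Nonempty) (hp : 1 < p) (hδ₁ : 0 < δ₁) (hδ₂ : 0 < δ₂)
    (hδ₂' : δ₂ < 1) (ht0 : 0 ≤ t) (ht1 : t < 1) (hgpos : ∀ x ∈ Ω, 0 < g x)
    (hg : ∀ x ∈ Ω, ∀ w ∈ Ω, ‖w - x‖ ≤ δ₂ * etaD Ω x → |g w - g x| ≤ t * g x)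
    (hn : 0 < n) (hn1 : δ₂ / (δ₁ * (1 - δ₂)) ≤ n) (hn2 : n ≤ 2 * (δ₂ / (δ₁ * (1 - δ₂))))
    (x h : Euc d) :
    ENNReal.ofReal (((1 - δ₂) / (2 * (1 + δ₂))) ^ ((d : ℝ) + p) * ((1 - t) / (1 + t)) ^ |β|) *
        kern d Ω g p β δ₂ u (x, h) ≤
      ENNReal.ofReal ((n : ℝ) ^ (-((d : ℝ) + 1))) * ∑ i ∈ Finset.range n,
        kern d Ω g p β δ₁ u (x + ((i : ℝ) / n) • h, (n : ℝ)⁻¹ • h) := by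
  have hn' : (0 : ℝ) < n := by exact_mod_cast hn
  have h1δ : 0 < 1 - δ₂ := by linarith
  have h1t : 0 < 1 - t := by linarith
  by_cases hq : x ∈ Ω ∧ ‖h‖ < δ₂ * etaD Ω x
  swap
  · rw [kern, indicator_of_notMem (by exact hq), mul_zero]; exact zero_le
  obtain ⟨hx, hh⟩ := hq
  have hηx := etaD_pos hΩ hne hx
  set w : ℕ → Euc d := fun i => x + ((i : ℝ) / n) • h with hw
  have hwx : ∀ i ∈ Finset.range n, ‖w i - x‖ ≤ ‖h‖ := by
    intro i hi
    have hi' : (i : ℝ) ≤ n := by exact_mod_cast (Finset.mem_range.1 hi).le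
    simp only [hw, add_sub_cancel_left, norm_smul, norm_div, Real.norm_natCast]
    exact mul_le_of_le_one_left (norm_nonneg _) ((div_le_one hn').2 hi')
  have hwΩ : ∀ i ∈ Finset.range n, w i ∈ Ω := by
    intro i hi
    refine ball_etaD_subset hΩ hx ?_
    rw [mem_ball, dist_eq_norm]
    nlinarith [hwx i hi]
  have hη1 : ∀ i ∈ Finset.range n, (1 - δ₂) * etaD Ω x ≤ etaD Ω (w i) := by
    intro i hi
    have := etaD_le_add (Ω := Ω) x (w i)
    rw [norm_sub_rev] at this
    linarith [hwx i hi]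
  have hη2 : ∀ i ∈ Finset.range n, etaD Ω (w i) ≤ (1 + δ₂) * etaD Ω x := by
    intro i hi
    linarith [hwx i hi, etaD_le_add (Ω := Ω) (w i) x]
  have hstep : ∀ i, w i + (n : ℝ)⁻¹ • h = w (i + 1) := by
    intro i
    simp only [hw, add_assoc, ← add_smul]
    push_cast
    congr 2
    field_simp
  have hadm : ∀ i ∈ Finset.range n, ‖(n : ℝ)⁻¹ • h‖ < δ₁ * etaD Ω (w i) := by
    intro i hi
    rw [norm_smul, norm_inv, Real.norm_natCast, inv_mul_eq_div, div_lt_iff₀ hn']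
    rw [div_le_iff₀ (by positivity)] at hn1
    calc ‖h‖ < δ₂ * etaD Ω x := hh
      _ ≤ (n * (δ₁ * (1 - δ₂))) * etaD Ω x := by gcongr
      _ = δ₁ * ((1 - δ₂) * etaD Ω x) * n := by ring
      _ ≤ _ := by gcongr; exact hη1 i hi
  have hR : ∀ i ∈ Finset.range n, kern d Ω g p β δ₁ u (w i, (n : ℝ)⁻¹ • h) =
      ENNReal.ofReal (g (w i) ^ (-β) * |u (w (i + 1)) - u (w i)| ^ p /
        (δ₁ * etaD Ω (w i)) ^ ((d : ℝ) + p)) := by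
    intro i hi
    rw [kern, indicator_of_mem (by exact ⟨hwΩ i hi, hadm i hi⟩), hstep]
  rw [Finset.sum_congr rfl hR, kern, indicator_of_mem (by exact ⟨hx, hh⟩),
    ← ENNReal.ofReal_sum_of_nonneg, ← ENNReal.ofReal_mul (by positivity),
    ← ENNReal.ofReal_mul (by positivity)]
  swap
  · intro i hi
    have := hgpos _ (hwΩ i hi)
    have := etaD_pos hΩ hne (hwΩ i hi)
    positivity
  refine ENNReal.ofReal_le_ofReal ?_
  have hgx := hgpos x hx
  have hJ : |u (x + h) - u x| ^ p ≤
      (n : ℝ) ^ (p - 1) * ∑ i ∈ Finset.range n, |u (w (i + 1)) - u (w i)| ^ p := by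
    have h0 : w 0 = x := by simp [hw]
    have hnn : w n = x + h := by simp [hw, div_self hn'.ne']
    have := abs_telescope_rpow_le (fun i => u (w i)) n hp.le
    simpa only [h0, hnn] using this
  set a := (1 - δ₂) / (2 * (1 + δ₂)) with ha
  have ha0 : 0 < a := by positivity
  set b := ((1 - t) / (1 + t)) ^ |β| with hb
  have hb0 : 0 < b := by positivity
  -- the powers of `n` combine as `n ^ (p - 1) = n ^ (-(d + 1)) * n ^ (d + p)`
  have hpow : (n : ℝ) ^ (p - 1) = (n : ℝ) ^ (-((d : ℝ) + 1)) * (n : ℝ) ^ ((d : ℝ) + p) := by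
    rw [← Real.rpow_add hn']; congr 1; ring
  calc a ^ ((d : ℝ) + p) * b *
        (g x ^ (-β) * |u (x + h) - u x| ^ p / (δ₂ * etaD Ω x) ^ ((d : ℝ) + p))
      ≤ a ^ ((d : ℝ) + p) * b * (g x ^ (-β) * ((n : ℝ) ^ (p - 1) *
          ∑ i ∈ Finset.range n, |u (w (i + 1)) - u (w i)| ^ p) /
            (δ₂ * etaD Ω x) ^ ((d : ℝ) + p)) := by gcongr
    _ = (n : ℝ) ^ (-((d : ℝ) + 1)) * ∑ i ∈ Finset.range n, (b * g x ^ (-β)) *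
          |u (w (i + 1)) - u (w i)| ^ p *
          ((a ^ ((d : ℝ) + p) * (n : ℝ) ^ ((d : ℝ) + p)) / (δ₂ * etaD Ω x) ^ ((d : ℝ) + p)) := by
        rw [← Finset.sum_mul, ← Finset.mul_sum, hpow]
        ring
    _ ≤ _ := by
        gcongr with i hi
        have hηw := etaD_pos hΩ hne (hwΩ i hi)
        have hgw := hgpos _ (hwΩ i hi)
        have hbase : a * n * (δ₁ * etaD Ω (w i)) ≤ δ₂ * etaD Ω x := by
          rw [← mul_div_assoc, le_div_iff₀ (by positivity)] at hn2
          calc a * n * (δ₁ * etaD Ω (w i))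
              ≤ a * n * (δ₁ * ((1 + δ₂) * etaD Ω x)) := by gcongr; exact hη2 i hi
            _ = n * (δ₁ * (1 - δ₂)) * etaD Ω x / 2 := by rw [ha]; field_simp
            _ ≤ 2 * δ₂ * etaD Ω x / 2 := by gcongr
            _ = _ := by ring
        have hP : (a ^ ((d : ℝ) + p) * (n : ℝ) ^ ((d : ℝ) + p)) / (δ₂ * etaD Ω x) ^ ((d : ℝ) + p) ≤
            1 / (δ₁ * etaD Ω (w i)) ^ ((d : ℝ) + p) := by
          rw [div_le_div_iff₀ (by positivity) (by positivity), one_mul,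
            ← Real.mul_rpow ha0.le hn'.le, ← Real.mul_rpow (by positivity) (by positivity)]
          exact Real.rpow_le_rpow (by positivity) hbase (by positivity)
        have hgd := abs_le.1 (hg x hx _ (hwΩ i hi) ((hwx i hi).trans hh.le))
        have hW : b * g x ^ (-β) ≤ g (w i) ^ (-β) :=
          weight_le ht0 ht1 hgx (by linarith [hgd.1]) (by linarith [hgd.2])
        rw [div_eq_mul_one_div (g (w i) ^ (-β) * _)]
        gcongr

/-- Enlarging the horizon enlarges the set of admissible pairs and changes the normalization by
the exact factor `(δ₂ / δ₁) ^ (d + p)`. -/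
lemma kern_le_kern {d : ℕ} {Ω : Set (Euc d)} {g u : Euc d → ℝ} {p β δ₁ δ₂ : ℝ}
    (hΩ : IsOpen Ω) (hne : (frontier Ω).Nonempty) (hδ₁ : 0 < δ₁) (hδ : δ₁ ≤ δ₂)
    (q : Euc d × Euc d) :
    kern d Ω g p β δ₁ u q ≤
      ENNReal.ofReal ((δ₂ / δ₁) ^ ((d : ℝ) + p)) * kern d Ω g p β δ₂ u q := by
  have hδ₂ : 0 < δ₂ := by linarith
  by_cases hq : q.1 ∈ Ω ∧ ‖q.2‖ < δ₁ * etaD Ω q.1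
  swap
  · rw [kern, indicator_of_notMem (by exact hq)]; exact zero_le
  obtain ⟨hx, hh⟩ := hq
  have hη := etaD_pos hΩ hne hx
  have hh' : ‖q.2‖ < δ₂ * etaD Ω q.1 := hh.trans_le (by gcongr)
  rw [kern, kern, indicator_of_mem (by exact ⟨hx, hh⟩), indicator_of_mem (by exact ⟨hx, hh'⟩),
    ← ENNReal.ofReal_mul (by positivity)]
  refine ENNReal.ofReal_le_ofReal (le_of_eq ?_)
  rw [Real.div_rpow hδ₂.le hδ₁.le, Real.mul_rpow hδ₁.le hη.le, Real.mul_rpow hδ₂.le hη.le]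
  field_simp

/-! ### Comparison of the seminorms -/

/-- Passage from `p`-th powers to seminorms. -/
lemma ofReal_mul_rpow_root {c : ℝ} (hc : 0 ≤ c) {p : ℝ} (hp : 1 < p) (E : ℝ≥0∞) :
    (ENNReal.ofReal c * E) ^ (1 / p) = ENNReal.ofReal (c ^ (1 / p)) * E ^ (1 / p) := by
  have : 0 ≤ 1 / p := by positivity
  rw [ENNReal.mul_rpow_of_nonneg _ _ this, ENNReal.ofReal_rpow_of_nonneg hc this]

/-- **Comparability of nonlocal seminorms with different bulk horizons.**
For `0 < δ₁ ≤ δ₂ < 1/(3κ₀²κ₁)` and every measurable `u : Ω → ℝ`,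
`((1-δ₂)/(2(1+δ₂)))^{(d+p)/p} ((1-κ₀κ₁δ₂)/(1+κ₀κ₁δ₂))^{|β|/p} [u]_{𝔚^p[δ₂](Ω;β)}
  ≤ [u]_{𝔚^p[δ₁](Ω;β)} ≤ (δ₂/δ₁)^{(d+p)/p} [u]_{𝔚^p[δ₂](Ω;β)}`. -/
theorem stmt4 (d : ℕ) (hd : 1 ≤ d) (p β κ₀ κ₁ : ℝ) (hp : 1 < p)
    (hκ₀ : 1 ≤ κ₀) (hκ₁ : 1 ≤ κ₁)
    (Ωstar Γ : Set (Euc d)) (hΩopen : IsOpen Ωstar) (hΩbdd : Bornology.IsBounded Ωstar)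
    (hΓfin : Γ.Finite) (hΓne : Γ.Nonempty) (hΓsub : Γ ⊆ closure Ωstar)
    (γ : Euc d → ℝ) (hγpos : ∀ x ∈ Ωstar \ Γ, 0 < γ x)
    (hγlip : LipschitzOnWith (Real.toNNReal κ₁) γ (Ωstar \ Γ))
    (hγdist : ∀ x ∈ Ωstar \ Γ, Metric.infDist x Γ ≤ κ₀ * γ x)
    (δ₁ δ₂ : ℝ) (hδ₁ : 0 < δ₁) (hδ₁₂ : δ₁ ≤ δ₂) (hδ₂ : δ₂ < 1 / (3 * κ₀ ^ 2 * κ₁))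
    (u : Euc d → ℝ) (hu : Measurable u) :
    ENNReal.ofReal
        (((1 - δ₂) / (2 * (1 + δ₂))) ^ (((d : ℝ) + p) / p) *
          ((1 - κ₀ * κ₁ * δ₂) / (1 + κ₀ * κ₁ * δ₂)) ^ (|β| / p)) *
        semiW d (Ωstar \ Γ) γ p β δ₂ u ≤ semiW d (Ωstar \ Γ) γ p β δ₁ u ∧
      semiW d (Ωstar \ Γ) γ p β δ₁ u ≤
        ENNReal.ofReal ((δ₂ / δ₁) ^ (((d : ℝ) + p) / p)) * semiW d (Ωstar \ Γ) γ p β δ₂ u := by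
  set Ω := Ωstar \ Γ with hΩdef
  have hΩ : IsOpen Ω := hΩopen.sdiff hΓfin.isClosed
  have hΓfr : Γ ⊆ frontier Ω := subset_frontier_diff hd hΩopen hΓfin hΓsub
  have hne : (frontier Ω).Nonempty := hΓne.mono hΓfr
  have hδ₂pos : 0 < δ₂ := by linarith
  -- `γ` need not be measurable outside `Ω`, so it is replaced by a Lipschitz extension
  obtain ⟨g, hglip, hγg⟩ := hγlip.extend_real
  have hgm : Measurable g := hglip.continuous.measurable
  have hgpos : ∀ x ∈ Ω, 0 < g x := fun x hx => hγg hx ▸ hγpos x hx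
  rw [lt_div_iff₀ (by positivity)] at hδ₂
  have hκ : κ₀ * κ₁ * δ₂ ≤ κ₀ ^ 2 * κ₁ * δ₂ := by
    gcongr; nlinarith
  have hκ1 : 1 ≤ κ₀ * κ₁ := by nlinarith
  have ht0 : 0 ≤ κ₀ * κ₁ * δ₂ := by positivity
  have ht1 : κ₀ * κ₁ * δ₂ < 1 := by nlinarith
  have hδ₂1 : δ₂ < 1 := by nlinarith
  have h1δ : 0 < 1 - δ₂ := by linarith
  have hgvar : ∀ x ∈ Ω, ∀ w ∈ Ω, ‖w - x‖ ≤ δ₂ * etaD Ω x →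
      |g w - g x| ≤ κ₀ * κ₁ * δ₂ * g x := by
    intro x hx w _ hwx
    have h1 := hglip.dist_le_mul w x
    rw [Real.dist_eq, dist_eq_norm, Real.coe_toNNReal _ (by linarith)] at h1
    have h2 : etaD Ω x ≤ κ₀ * g x :=
      (infDist_le_infDist_of_subset hΓfr hΓne).trans (hγg hx ▸ hγdist x hx)
    calc |g w - g x| ≤ κ₁ * ‖w - x‖ := h1
      _ ≤ κ₁ * (δ₂ * (κ₀ * g x)) := by gcongr; exact hwx.trans (by gcongr)
      _ = _ := by ring
  have hE := fun δ => nlEnergy_eq_kern (p := p) (β := β) (δ := δ) hΩ hgm hu hγg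
  have hm : ∀ δ, Measurable (kern d Ω g p β δ u) := fun δ => measurable_kern hΩ hgm hu
  have hpinv : 0 ≤ 1 / p := by positivity
  have ha0 : 0 ≤ (1 - δ₂) / (2 * (1 + δ₂)) := by positivity
  have hb0 : 0 ≤ (1 - κ₀ * κ₁ * δ₂) / (1 + κ₀ * κ₁ * δ₂) :=
    div_nonneg (by linarith) (by linarith)
  constructor
  -- the number `n` of steps makes `h / n` admissible for `δ₁` along the whole segment
  · set n := ⌈δ₂ / (δ₁ * (1 - δ₂))⌉₊ with hndef
    have hr : 1 ≤ δ₂ / (δ₁ * (1 - δ₂)) := by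
      rw [le_div_iff₀ (by positivity)]; nlinarith
    have hn1 : δ₂ / (δ₁ * (1 - δ₂)) ≤ n := Nat.le_ceil _
    have hn2 : (n : ℝ) ≤ 2 * (δ₂ / (δ₁ * (1 - δ₂))) := by
      linarith [Nat.ceil_lt_add_one (zero_le_one.trans hr)]
    have hn : 0 < n := Nat.ceil_pos.2 (by linarith)
    have hn' : (0 : ℝ) < n := by exact_mod_cast hn
    have hmi : ∀ i : ℕ, Measurable fun q : Euc d × Euc d =>
        kern d Ω g p β δ₁ u (q.2 + ((i : ℝ) / n) • q.1, (n : ℝ)⁻¹ • q.1) := fun i =>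
      (hm δ₁).comp (by fun_prop)
    set L := ((1 - δ₂) / (2 * (1 + δ₂))) ^ ((d : ℝ) + p) *
      ((1 - κ₀ * κ₁ * δ₂) / (1 + κ₀ * κ₁ * δ₂)) ^ |β| with hL
    have hLroot : ((1 - δ₂) / (2 * (1 + δ₂))) ^ (((d : ℝ) + p) / p) *
        ((1 - κ₀ * κ₁ * δ₂) / (1 + κ₀ * κ₁ * δ₂)) ^ (|β| / p) = L ^ (1 / p) := by
      rw [hL, Real.mul_rpow (by positivity) (by positivity), ← Real.rpow_mul ha0,
        ← Real.rpow_mul hb0, mul_one_div, mul_one_div]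
    have key : ENNReal.ofReal L * ∫⁻ h, ∫⁻ x, kern d Ω g p β δ₂ u (x, h) ≤
        ∫⁻ h, ∫⁻ x, kern d Ω g p β δ₁ u (x, h) := by
      calc ENNReal.ofReal L * ∫⁻ h, ∫⁻ x, kern d Ω g p β δ₂ u (x, h)
          = ∫⁻ h, ∫⁻ x, ENNReal.ofReal L * kern d Ω g p β δ₂ u (x, h) := by
            rw [← lintegral_const_mul' _ _ ENNReal.ofReal_ne_top]
            exact lintegral_congr fun h => (lintegral_const_mul' _ _ ENNReal.ofReal_ne_top).symm
        _ ≤ ∫⁻ h, ∫⁻ x, ENNReal.ofReal ((n : ℝ) ^ (-((d : ℝ) + 1))) * ∑ i ∈ Finset.range n,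
              kern d Ω g p β δ₁ u (x + ((i : ℝ) / n) • h, (n : ℝ)⁻¹ • h) :=
            lintegral_mono fun h => lintegral_mono fun x =>
              kern_le_sum hΩ hne hp hδ₁ hδ₂pos hδ₂1 ht0 ht1 hgpos hgvar hn hn1 hn2 x h
        _ = ENNReal.ofReal ((n : ℝ) ^ (-((d : ℝ) + 1))) * ∑ i ∈ Finset.range n,
              ∫⁻ h, ∫⁻ x, kern d Ω g p β δ₁ u (x + ((i : ℝ) / n) • h, (n : ℝ)⁻¹ • h) := by
            rw [← lintegral_finsetSum _ fun i _ => (hmi i).lintegral_prod_right',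
              ← lintegral_const_mul' _ _ ENNReal.ofReal_ne_top]
            refine lintegral_congr fun h => ?_
            rw [lintegral_const_mul' _ _ ENNReal.ofReal_ne_top, lintegral_finsetSum]
            exact fun i _ => (hmi i).comp measurable_prodMk_left
        _ = ∫⁻ h, ∫⁻ x, kern d Ω g p β δ₁ u (x, h) := by
            simp_rw [lintegral_kern_shear hΩ hgm hu _ hn]
            rw [Finset.sum_const, Finset.card_range, nsmul_eq_mul, ← mul_assoc, ← mul_assoc,
              ← ENNReal.ofReal_natCast, ← ENNReal.ofReal_mul (by positivity),
              ← ENNReal.ofReal_mul (by positivity)]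
            have : (n : ℝ) ^ (-((d : ℝ) + 1)) * n * (n : ℝ) ^ d = 1 := by
              rw [mul_assoc, ← pow_succ', Real.rpow_neg hn'.le, ← Nat.cast_succ,
                Real.rpow_natCast]
              exact inv_mul_cancel₀ (by positivity)
            rw [this, ENNReal.ofReal_one, one_mul]
    rw [hLroot, semiW, semiW, ← ofReal_mul_rpow_root (by positivity) hp, hE, hE, mul_left_comm]
    exact ENNReal.rpow_le_rpow (by gcongr) hpinv
  · have hroot : (δ₂ / δ₁) ^ (((d : ℝ) + p) / p) = ((δ₂ / δ₁) ^ ((d : ℝ) + p)) ^ (1 / p) := by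
      rw [← Real.rpow_mul (by positivity), mul_one_div]
    have key : ∫⁻ h, ∫⁻ x, kern d Ω g p β δ₁ u (x, h) ≤
        ENNReal.ofReal ((δ₂ / δ₁) ^ ((d : ℝ) + p)) *
          ∫⁻ h, ∫⁻ x, kern d Ω g p β δ₂ u (x, h) := by
      rw [← lintegral_const_mul' _ _ ENNReal.ofReal_ne_top]
      refine lintegral_mono fun h => ?_
      rw [← lintegral_const_mul' _ _ ENNReal.ofReal_ne_top]
      exact lintegral_mono fun x => kern_le_kern hΩ hne hδ₁ hδ₁₂ (x, h)
    rw [hroot, semiW, semiW, ← ofReal_mul_rpow_root (by positivity) hp, hE, hE, mul_left_comm]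
    exact ENNReal.rpow_le_rpow (by gcongr) hpinv

end
end

section
/- Assume the domain and weight setting below with d ≥ 1, p ∈ (1,∞), β ∈ ℝ, and set κ := κ₀²κ₁. Then for every δ ∈ (0, 1/(3κ)) and every continuously differentiable function u : Ω → ℝ one has [u]_{𝔚^p[δ](Ω;β)}^p ≤ (1/(1−δ)) · ((1+κδ)/(1−κδ))^{|β|} · ∫_Ω |∇u(x)|^p γ(x)^{−β} dx. -/
/-!
Write `Ω = Ωstar \ Γ`, `η = dist(·, ∂Ω)` and `B` for the unit ball. Substituting `y = x + δ η(x) s`,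
`s ∈ B`, and applying the fundamental theorem of calculus and Jensen's inequality along the segment
from `x` to `y` (`abs_sub_rpow_le_lintegral`), the energy is at most
`normC · ∫_B ∫_0^1 ∫_Ω γ(x)^{-β} |∇u(x + t δ η(x) s) · s|^p dx dt ds`.

For fixed `s` and `t` the map `x ↦ x + t δ η(x) s` sends `Ω` injectively into itself, since `η` is
1-Lipschitz and `δ < 1`; by Rademacher's theorem it is differentiable almost everywhere, and its
Jacobian `1 + t δ ∇η(x)·s` is at least `1 - δ`. Changing variables costs the factor `1/(1-δ)`
(`lintegral_comp_shift_le`). Moving the weight from `x` to the new point costs the factor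
`((1+κδ)/(1-κδ))^{|β|}`: as `Γ ⊆ ∂Ω`, one has `η ≤ dist(·, Γ) ≤ κ₀ γ`, so the two values of `γ`
differ by at most `κ₁ δ η(x) ≤ κ δ γ(x)` (`rpow_neg_le_of_abs_sub_le`).

What remains is `normC · ∫_B |∇u(z)·s|^p ds = |∇u(z)|^p` (`normC_mul_lintegral_ball_clm`). This moment
is found by evaluating `∫ |e·x|^p exp(-|x|²) dx`, for a unit vector `e`, in two ways: as a product of
one-dimensional integrals in an orthonormal basis containing `e`, and by the layer-cake formula,
which by homogeneity gives `Γ((d+p)/2 + 1) ∫_B |e·s|^p ds`.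
-/

open MeasureTheory Metric Set Filter
open scoped ENNReal NNReal Topology

noncomputable section

/-! ### Changes of variables -/

open scoped Pointwise in
/-- Affine change of variables from the unit ball to `ball x r`. -/
theorem lintegral_ball_eq {d : ℕ} (x : Euc d) {r : ℝ} (hr : 0 < r) (f : Euc d → ℝ≥0∞) :
    ∫⁻ y in ball x r, f y = ENNReal.ofReal (r ^ d) * ∫⁻ s in ball (0 : Euc d) 1, f (x + r • s) := by
  have himg : (fun s : Euc d => x + r • s) '' ball 0 1 = ball x r := by
    have h : (fun s : Euc d => x + r • s) '' ball 0 1 = x +ᵥ (r • ball (0 : Euc d) 1) := by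
      ext y
      simp [Set.mem_vadd_set, Set.mem_smul_set]
    rw [h, smul_unitBall_of_pos hr]
    simp
  have hder : ∀ s ∈ ball (0 : Euc d) 1, HasFDerivWithinAt (fun s : Euc d => x + r • s)
      (r • ContinuousLinearMap.id ℝ (Euc d)) (ball 0 1) s := fun s _ =>
    (((hasFDerivAt_id s).const_smul r).const_add x).hasFDerivWithinAt
  have hinj : InjOn (fun s : Euc d => x + r • s) (ball 0 1) := by
    intro a _ b _ h
    exact smul_right_injective _ hr.ne' (add_left_cancel h)
  rw [← himg, lintegral_image_eq_lintegral_abs_det_fderiv_mul volume measurableSet_ball hder hinj,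
    ← lintegral_const_mul' _ _ ENNReal.ofReal_ne_top]
  have hdet : (r • ContinuousLinearMap.id ℝ (Euc d)).det = r ^ d := by
    rw [ContinuousLinearMap.det]
    simp
  simp only [hdet, abs_of_pos (pow_pos hr d)]

/-- A ball that does not reach the boundary of an open set stays inside the set. -/
theorem ball_infDist_frontier_subset {d : ℕ} {Ω : Set (Euc d)} {x : Euc d} (hx : x ∈ Ω) :
    ball x (infDist x (frontier Ω)) ⊆ Ω := by
  intro y hy
  by_contra hyΩ
  have hpos : 0 < infDist x (frontier Ω) := pos_of_mem_ball hy
  have hpre : IsPreconnected (ball x (infDist x (frontier Ω))) :=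
    (convex_ball x _).isPreconnected
  have hfr : ∀ z ∈ ball x (infDist x (frontier Ω)), z ∉ frontier Ω := fun z hz hz' =>
    Set.disjoint_left.1 disjoint_ball_infDist hz hz'
  have hyc : y ∉ closure Ω := fun hc => hfr y hy ⟨hc, fun hi => hyΩ (interior_subset hi)⟩
  have hxi : x ∈ interior Ω := by
    by_contra hi
    exact hfr x (mem_ball_self hpos) ⟨subset_closure hx, hi⟩
  obtain ⟨z, -, hz1, hz2⟩ := hpre (interior Ω) (closure Ω)ᶜ isOpen_interior
    isClosed_closure.isOpen_compl
    (fun z hz => by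
      by_cases hc : z ∈ closure Ω
      · exact Or.inl (by_contra fun hi => hfr z hz ⟨hc, hi⟩)
      · exact Or.inr hc)
    ⟨x, mem_ball_self hpos, hxi⟩ ⟨y, hy, hyc⟩
  exact hz2 (subset_closure (interior_subset hz1))

/-- The change of variables along `x ↦ x + c η(x) s`, with Jacobian `1 + c ∇η(x)·s ≥ 1 - δ`. -/
theorem lintegral_comp_shift_le {d : ℕ} {Ω : Set (Euc d)} (hΩ : MeasurableSet Ω)
    {η : Euc d → ℝ} (hη : LipschitzWith 1 η) {δ : ℝ} (hδ1 : δ < 1)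
    {v : Euc d} (hv : ‖v‖ ≤ δ) (hmap : MapsTo (fun x => x + η x • v) Ω Ω)
    (f : Euc d → ℝ≥0∞) :
    ∫⁻ x in Ω, f (x + η x • v) ≤ ENNReal.ofReal (1 / (1 - δ)) * ∫⁻ z in Ω, f z := by
  set Φ : Euc d → Euc d := fun x => x + η x • v with hΦ
  -- Rademacher: `η` is differentiable off a null set, so the integral may be restricted to `A`
  set A : Set (Euc d) := {x | DifferentiableAt ℝ η x}
  have hA : MeasurableSet A := measurableSet_of_differentiableAt ℝ η
  have hAae : ∀ᵐ x : Euc d, x ∈ A := hη.ae_differentiableAt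
  have hinj : Function.Injective Φ := by
    intro a b hab
    by_contra hne
    have hpos : 0 < ‖a - b‖ := norm_pos_iff.2 (sub_ne_zero.2 hne)
    have h1 : a - b = (η b - η a) • v := by
      have : a + η a • v = b + η b • v := hab
      rw [sub_smul, sub_eq_sub_iff_add_eq_add, this, add_comm]
    have h2 : |η b - η a| ≤ ‖a - b‖ := by
      have := hη.dist_le_mul b a
      rw [Real.dist_eq, dist_comm, dist_eq_norm] at this
      simpa using this
    have h3 : ‖a - b‖ ≤ ‖a - b‖ * δ := by
      calc ‖a - b‖ = |η b - η a| * ‖v‖ := by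
            conv_lhs => rw [h1]
            rw [norm_smul, Real.norm_eq_abs]
        _ ≤ ‖a - b‖ * δ := by gcongr
    nlinarith
  set Φ' : Euc d → (Euc d →L[ℝ] Euc d) := fun x =>
    ContinuousLinearMap.id ℝ (Euc d) + (fderiv ℝ η x).smulRight v
  have hder : ∀ x ∈ Ω ∩ A, HasFDerivWithinAt Φ (Φ' x) (Ω ∩ A) x := by
    intro x hx
    have h : DifferentiableAt ℝ η x := hx.2
    exact ((hasFDerivAt_id x).add (h.hasFDerivAt.smul_const v)).hasFDerivWithinAt
  have hdet : ∀ x, 1 - δ ≤ |(Φ' x).det| := by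
    intro x
    -- `Φ'` is a rank-one perturbation of the identity
    have h1 : (Φ' x).det = 1 + fderiv ℝ η x v := by
      have : ((Φ' x : Euc d →L[ℝ] Euc d) : Euc d →ₗ[ℝ] Euc d)
          = LinearMap.transvection ((fderiv ℝ η x : Euc d →L[ℝ] ℝ) : Euc d →ₗ[ℝ] ℝ) v := by
        ext y; simp [Φ', LinearMap.transvection]
      rw [ContinuousLinearMap.det, this, LinearMap.transvection.det]
      simp
    have h2 : |fderiv ℝ η x v| ≤ δ := by
      have h3 := (fderiv ℝ η x).le_opNorm v
      have h4 : ‖fderiv ℝ η x‖ ≤ 1 := by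
        simpa using norm_fderiv_le_of_lipschitz ℝ (x₀ := x) hη
      rw [Real.norm_eq_abs] at h3
      calc _ ≤ _ := h3
        _ ≤ 1 * δ := by gcongr
        _ = δ := one_mul δ
    rw [h1]
    have := neg_le_of_abs_le h2
    exact le_trans (by linarith) (le_abs_self _)
  have hδ' : 0 < 1 - δ := by linarith
  calc ∫⁻ x in Ω, f (Φ x) = ∫⁻ x in Ω ∩ A, f (Φ x) := by
        refine setLIntegral_congr ?_
        filter_upwards [hAae] with x hx
        exact propext ⟨fun h => ⟨h, hx⟩, fun h => h.1⟩
    _ ≤ ∫⁻ x in Ω ∩ A, ENNReal.ofReal (1 / (1 - δ)) *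
          (ENNReal.ofReal |(Φ' x).det| * f (Φ x)) := by
        refine lintegral_mono fun x => ?_
        rw [← mul_assoc, ← ENNReal.ofReal_mul (by positivity)]
        refine le_mul_of_one_le_left' ?_
        rw [ENNReal.one_le_ofReal, one_div, ← div_eq_inv_mul, one_le_div hδ']
        exact hdet x
    _ = ENNReal.ofReal (1 / (1 - δ)) * ∫⁻ z in Φ '' (Ω ∩ A), f z := by
        rw [lintegral_const_mul' _ _ ENNReal.ofReal_ne_top,
          lintegral_image_eq_lintegral_abs_det_fderiv_mul volume (hΩ.inter hA) hder hinj.injOn]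
    _ ≤ _ := by
        gcongr
        rintro _ ⟨x, hx, rfl⟩
        exact hmap hx.1

/-! ### The directional `p`-th moment of the unit ball -/

theorem integral_abs_rpow_mul_gaussian {p : ℝ} (hp : 1 < p) :
    ∫ t : ℝ, |t| ^ p * Real.exp (-t ^ 2) = Real.Gamma ((p + 1) / 2) := by
  have h := integral_rpow_mul_exp_neg_rpow (p := 2) (q := p) (by norm_num) (by linarith)
  have h2 := integral_comp_abs (f := fun t : ℝ => t ^ p * Real.exp (-t ^ (2 : ℝ)))
  simp only [Real.rpow_two, sq_abs] at h2
  simp only [Real.rpow_two] at h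
  rw [h2]
  rw [h]
  ring

/-- A coordinate's absolute `p`-th moment against the (unnormalized) Gaussian `exp (-‖x‖²)`. -/
theorem integral_coord_gaussian {d : ℕ} (i₀ : Fin d) {p : ℝ} (hp : 1 < p) :
    ∫ x : Euc d, |x i₀| ^ p * Real.exp (-‖x‖ ^ 2) =
      Real.Gamma ((p + 1) / 2) * Real.sqrt Real.pi ^ (d - 1) := by
  rw [← (PiLp.volume_preserving_toLp (Fin d)).integral_comp
    (MeasurableEquiv.toLp 2 (Fin d → ℝ)).measurableEmbedding]
  have h : ∀ x : Fin d → ℝ, |(WithLp.toLp 2 x : Euc d) i₀| ^ p *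
      Real.exp (-‖(WithLp.toLp 2 x : Euc d)‖ ^ 2) =
      ∏ i, (fun (i : Fin d) (t : ℝ) => (if i = i₀ then |t| ^ p else 1) * Real.exp (-t ^ 2)) i
        (x i) := by
    intro x
    rw [Finset.prod_mul_distrib, ← Real.exp_sum, Finset.prod_ite_eq' Finset.univ i₀,
      EuclideanSpace.norm_sq_eq]
    simp
  simp only [h]
  rw [integral_fintype_prod_volume_eq_prod
      (fun (i : Fin d) (t : ℝ) => (if i = i₀ then |t| ^ p else 1) * Real.exp (-t ^ 2)),
    ← Finset.mul_prod_erase _ _ (Finset.mem_univ i₀)]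
  congr 1
  · simpa using integral_abs_rpow_mul_gaussian hp
  · rw [Finset.prod_congr rfl (g := fun _ => Real.sqrt Real.pi)]
    · simp
    · intro i hi
      have := integral_gaussian 1
      simpa [Finset.ne_of_mem_erase hi] using this

theorem exists_orthonormalBasis_apply_eq {d : ℕ} (i₀ : Fin d) {e : Euc d} (he : ‖e‖ = 1) :
    ∃ b : OrthonormalBasis (Fin d) ℝ (Euc d), b i₀ = e := by
  have hv : Orthonormal ℝ (({i₀} : Set (Fin d)).domRestrict (fun _ : Fin d => e)) := by
    refine ⟨fun _ => he, fun i j hij => ?_⟩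
    exact absurd (Subsingleton.elim i j) hij
  obtain ⟨b, hb⟩ := hv.exists_orthonormalBasis_extension_of_card_eq (by simp)
  exact ⟨b, hb i₀ rfl⟩

theorem lintegral_inner_gaussian {d : ℕ} (hd : 1 ≤ d) {p : ℝ} (hp : 1 < p) {e : Euc d}
    (he : ‖e‖ = 1) :
    ∫⁻ x : Euc d, ENNReal.ofReal (|inner ℝ e x| ^ p * Real.exp (-‖x‖ ^ 2)) =
      ENNReal.ofReal (Real.Gamma ((p + 1) / 2) * Real.sqrt Real.pi ^ (d - 1)) := by
  set i₀ : Fin d := ⟨0, hd⟩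
  obtain ⟨b, hb⟩ := exists_orthonormalBasis_apply_eq i₀ he
  have h : ∀ x : Euc d, |inner ℝ e x| ^ p * Real.exp (-‖x‖ ^ 2) =
      (fun y : Euc d => |y i₀| ^ p * Real.exp (-‖y‖ ^ 2)) (b.repr x) := by
    intro x
    simp [b.repr_apply_apply, hb]
  simp only [h]
  have hpos : 0 < Real.Gamma ((p + 1) / 2) * Real.sqrt Real.pi ^ (d - 1) :=
    mul_pos (Real.Gamma_pos_of_pos (by linarith)) (pow_pos (Real.sqrt_pos.2 Real.pi_pos) _)
  have hI := integral_coord_gaussian i₀ hp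
  -- a nonzero Bochner integral forces integrability
  have hint : Integrable (fun y : Euc d => |y i₀| ^ p * Real.exp (-‖y‖ ^ 2)) :=
    Integrable.of_integral_ne_zero (by rw [hI]; exact hpos.ne')
  rw [b.measurePreserving_repr.lintegral_comp_emb
      (f := fun y : Euc d => ENNReal.ofReal (|y i₀| ^ p * Real.exp (-‖y‖ ^ 2)))
      b.repr.toHomeomorph.measurableEmbedding,
    ← ofReal_integral_eq_lintegral_ofReal hint (Eventually.of_forall fun y => by positivity), hI]

theorem lintegral_exp_neg_Ioi (a : ℝ) :
    ∫⁻ r in Ioi a, ENNReal.ofReal (Real.exp (-r)) = ENNReal.ofReal (Real.exp (-a)) := by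
  rw [← ofReal_integral_eq_lintegral_ofReal (integrableOn_exp_neg_Ioi a)
    (Eventually.of_forall fun y => (Real.exp_pos _).le), integral_exp_neg_Ioi]

/-- Layer-cake evaluation of a Gaussian moment: `|⟪e, ·⟫|^p` is homogeneous of degree `p`, so its
Gaussian integral is its integral over the unit ball times a value of the Gamma function. -/
theorem lintegral_inner_gaussian_eq_ball {d : ℕ} {p : ℝ} (hp : 1 < p) (e : Euc d) :
    ∫⁻ x : Euc d, ENNReal.ofReal (|inner ℝ e x| ^ p * Real.exp (-‖x‖ ^ 2)) =
      ENNReal.ofReal (Real.Gamma (((d : ℝ) + p) / 2 + 1)) *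
        ∫⁻ s in ball (0 : Euc d) 1, ENNReal.ofReal (|inner ℝ e s| ^ p) := by
  set M := ∫⁻ s in ball (0 : Euc d) 1, ENNReal.ofReal (|inner ℝ e s| ^ p)
  have hmeas : Measurable fun q : Euc d × ℝ => indicator {q : Euc d × ℝ | ‖q.1‖ ^ 2 < q.2}
      (fun q => ENNReal.ofReal (|inner ℝ e q.1| ^ p) * ENNReal.ofReal (Real.exp (-q.2))) q := by
    refine Measurable.indicator (by fun_prop) ?_
    exact measurableSet_lt (by fun_prop) (by fun_prop)
  -- insert `exp (-‖x‖²) = ∫_{r > ‖x‖²} exp (-r) dr` and exchange the integrals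
  have h1 : ∀ x : Euc d, ENNReal.ofReal (|inner ℝ e x| ^ p * Real.exp (-‖x‖ ^ 2)) =
      ∫⁻ r, indicator {q : Euc d × ℝ | ‖q.1‖ ^ 2 < q.2}
      (fun q => ENNReal.ofReal (|inner ℝ e q.1| ^ p) * ENNReal.ofReal (Real.exp (-q.2)))
        (x, r) := by
    intro x
    rw [ENNReal.ofReal_mul (by positivity), ← lintegral_exp_neg_Ioi,
      ← lintegral_const_mul' _ _ ENNReal.ofReal_ne_top, ← lintegral_indicator measurableSet_Ioi]
    rfl
  have h2 : ∀ r : ℝ, ∫⁻ x : Euc d, indicator {q : Euc d × ℝ | ‖q.1‖ ^ 2 < q.2}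
      (fun q => ENNReal.ofReal (|inner ℝ e q.1| ^ p) * ENNReal.ofReal (Real.exp (-q.2))) (x, r)
      = indicator (Ioi (0 : ℝ))
        (fun r => ENNReal.ofReal (Real.exp (-r) * r ^ (((d : ℝ) + p) / 2 + 1 - 1)) * M) r := by
    intro r
    by_cases hr : 0 < r
    · have hs : 0 < Real.sqrt r := Real.sqrt_pos.2 hr
      have hset : ∀ x : Euc d, x ∈ ball (0 : Euc d) (Real.sqrt r) ↔ ‖x‖ ^ 2 < r := by
        intro x
        rw [mem_ball_zero_iff, Real.lt_sqrt (norm_nonneg x)]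
      have : ∫⁻ x : Euc d, indicator {q : Euc d × ℝ | ‖q.1‖ ^ 2 < q.2}
          (fun q => ENNReal.ofReal (|inner ℝ e q.1| ^ p) * ENNReal.ofReal (Real.exp (-q.2))) (x, r)
          = ∫⁻ x in ball (0 : Euc d) (Real.sqrt r),
            ENNReal.ofReal (|inner ℝ e x| ^ p) * ENNReal.ofReal (Real.exp (-r)) := by
        rw [← lintegral_indicator measurableSet_ball]
        refine lintegral_congr fun x => ?_
        simp only [indicator, hset, mem_ofPred_eq]
      rw [this, lintegral_mul_const' _ _ ENNReal.ofReal_ne_top, lintegral_ball_eq _ hs,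
        indicator_of_mem (mem_Ioi.2 hr)]
      have h3 : ∀ s : Euc d, ENNReal.ofReal (|inner ℝ e (0 + Real.sqrt r • s)| ^ p) =
          ENNReal.ofReal (Real.sqrt r ^ p) * ENNReal.ofReal (|inner ℝ e s| ^ p) := by
        intro s
        rw [zero_add, inner_smul_right, abs_mul, abs_of_pos hs,
          Real.mul_rpow hs.le (abs_nonneg _), ENNReal.ofReal_mul (by positivity)]
      simp only [h3]
      rw [lintegral_const_mul' _ _ ENNReal.ofReal_ne_top, ← mul_assoc,
        ← ENNReal.ofReal_mul (by positivity), mul_right_comm,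
        ← ENNReal.ofReal_mul (by positivity)]
      congr 2
      rw [← Real.rpow_natCast, ← Real.rpow_add hs, Real.sqrt_eq_rpow, ← Real.rpow_mul hr.le,
        mul_comm]
      congr 2
      ring
    · rw [indicator_of_notMem (by simpa using hr)]
      refine (lintegral_congr fun x => indicator_of_notMem ?_ _).trans lintegral_zero
      have := sq_nonneg ‖x‖
      simp only [mem_ofPred_eq, not_lt]
      linarith
  simp only [h1]
  rw [lintegral_lintegral_swap hmeas.aemeasurable]
  simp only [h2]
  have hg : 0 < ((d : ℝ) + p) / 2 + 1 := by positivity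
  rw [lintegral_indicator measurableSet_Ioi, lintegral_mul_const _ (by fun_prop),
    ← ofReal_integral_eq_lintegral_ofReal (Real.GammaIntegral_convergent hg),
    ← Real.Gamma_eq_integral hg]
  filter_upwards [ae_restrict_mem measurableSet_Ioi] with r hr
  have : (0 : ℝ) < r := hr
  positivity

/-- `normC d p` is the reciprocal of `∫_{B(0,1)} |e·s|^p ds`, `‖e‖ = 1`. -/
theorem normC_mul_lintegral_ball {d : ℕ} (hd : 1 ≤ d) {p : ℝ} (hp : 1 < p) {e : Euc d}
    (he : ‖e‖ = 1) :
    ENNReal.ofReal (normC d p) *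
      ∫⁻ s in ball (0 : Euc d) 1, ENNReal.ofReal (|inner ℝ e s| ^ p) = 1 := by
  have h := (lintegral_inner_gaussian_eq_ball hp e).symm.trans (lintegral_inner_gaussian hd hp he)
  have hG : 0 < Real.Gamma ((p + 1) / 2) := Real.Gamma_pos_of_pos (by linarith)
  have hc : 0 < Real.Gamma ((d : ℝ) / 2) := Real.Gamma_pos_of_pos (by positivity)
  have ha : 0 < Real.Gamma (((d : ℝ) + p) / 2) := Real.Gamma_pos_of_pos (by positivity)
  have hπ : 0 < Real.sqrt Real.pi := Real.sqrt_pos.2 Real.pi_pos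
  have hpow : Real.pi ^ ((d : ℝ) / 2) = Real.sqrt Real.pi ^ (d - 1) * Real.sqrt Real.pi := by
    rw [← pow_succ, Nat.sub_add_cancel hd, Real.sqrt_eq_rpow, ← Real.rpow_natCast,
      ← Real.rpow_mul Real.pi_pos.le]
    congr 1
    ring
  have hn : normC d p = (Real.Gamma ((p + 1) / 2) * Real.sqrt Real.pi ^ (d - 1))⁻¹ *
      Real.Gamma (((d : ℝ) + p) / 2 + 1) := by
    rw [Real.Gamma_add_one (by positivity), normC, Cbar, sphArea, hpow]
    field_simp
  rw [hn, ENNReal.ofReal_mul (by positivity), mul_assoc, h, ← ENNReal.ofReal_mul (by positivity),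
    inv_mul_cancel₀ (by positivity), ENNReal.ofReal_one]

/-- The choice of normalization: the averaged `p`-th power of the directional derivatives is the
`p`-th power of the norm of the derivative. -/
theorem normC_mul_lintegral_ball_clm {d : ℕ} (hd : 1 ≤ d) {p : ℝ} (hp : 1 < p)
    (L : Euc d →L[ℝ] ℝ) :
    ENNReal.ofReal (normC d p) * ∫⁻ s in ball (0 : Euc d) 1, ENNReal.ofReal (|L s| ^ p) =
      ENNReal.ofReal (‖L‖ ^ p) := by
  have hp0 : p ≠ 0 := by linarith
  by_cases hL : L = 0
  · simp [hL, Real.zero_rpow hp0]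
  set v := (InnerProductSpace.toDual ℝ (Euc d)).symm L with hv
  have hLv : ∀ s, L s = inner ℝ v s := fun s => by rw [hv, InnerProductSpace.toDual_symm_apply]
  have hnv : ‖v‖ = ‖L‖ := LinearIsometryEquiv.norm_map _ _
  have hpos : 0 < ‖v‖ := by rw [hnv]; exact norm_pos_iff.2 hL
  have he : ‖(‖v‖⁻¹ • v)‖ = 1 := by
    rw [norm_smul, norm_inv, norm_norm, inv_mul_cancel₀ hpos.ne']
  have h := normC_mul_lintegral_ball hd hp he
  have h2 : ∀ s, ENNReal.ofReal (|L s| ^ p) =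
      ENNReal.ofReal (‖L‖ ^ p) * ENNReal.ofReal (|inner ℝ (‖v‖⁻¹ • v) s| ^ p) := by
    intro s
    rw [hLv, ← hnv, ← ENNReal.ofReal_mul (by positivity), ← Real.mul_rpow (by positivity)
      (by positivity), real_inner_smul_left, abs_mul, abs_of_pos (inv_pos.2 hpos),
      mul_inv_cancel_left₀ hpos.ne']
  simp only [h2]
  rw [lintegral_const_mul' _ _ ENNReal.ofReal_ne_top, mul_left_comm, h, mul_one]

/-! ### The energy estimate -/

/-- Fundamental theorem of calculus along a segment, followed by Jensen's inequality. -/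
theorem abs_sub_rpow_le_lintegral {d : ℕ} {Ω : Set (Euc d)} (hΩ : IsOpen Ω) {u : Euc d → ℝ}
    (hu : ContDiffOn ℝ 1 u Ω) {p : ℝ} (hp : 1 < p) {x h : Euc d}
    (hseg : ∀ t ∈ Icc (0 : ℝ) 1, x + t • h ∈ Ω) :
    ENNReal.ofReal (|u (x + h) - u x| ^ p) ≤
      ∫⁻ t in Ioc (0 : ℝ) 1, ENNReal.ofReal (|fderiv ℝ u (x + t • h) h| ^ p) := by
  have hp0 : 0 < p := by linarith
  set g : ℝ → ℝ := fun t => fderiv ℝ u (x + t • h) h with hg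
  have hcont : ContinuousOn g (Icc 0 1) := by
    have h1 : ContinuousOn (fderiv ℝ u) Ω := hu.continuousOn_fderiv_of_isOpen hΩ le_rfl
    have h2 : ContinuousOn (fun t : ℝ => fderiv ℝ u (x + t • h)) (Icc 0 1) :=
      h1.comp (by fun_prop) hseg
    exact h2.clm_apply continuousOn_const
  have hFTC : ∫ t in (0 : ℝ)..1, g t = u (x + h) - u x := by
    have := intervalIntegral.integral_eq_sub_of_hasDerivAt (a := 0) (b := 1)
      (f := fun t : ℝ => u (x + t • h)) (f' := g) ?_ ?_
    · simpa using this
    · intro t ht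
      rw [uIcc_of_le zero_le_one] at ht
      have hd : HasFDerivAt u (fderiv ℝ u (x + t • h)) (x + t • h) :=
        ((hu.contDiffAt (hΩ.mem_nhds (hseg t ht))).differentiableAt one_ne_zero).hasFDerivAt
      have hl : HasDerivAt (fun t : ℝ => x + t • h) h t := by
        simpa using ((hasDerivAt_id t).smul_const h).const_add x
      exact hd.comp_hasDerivAt t hl
    · exact (hcont.mono (by rw [uIcc_of_le zero_le_one])).intervalIntegrable
  set μ : Measure ℝ := volume.restrict (Ioc (0 : ℝ) 1) with hμ
  have : IsProbabilityMeasure μ := ⟨by simp [hμ]⟩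
  have hgm : AEStronglyMeasurable g μ :=
    (hcont.mono Ioc_subset_Icc_self).aestronglyMeasurable measurableSet_Ioc
  have hle : ‖u (x + h) - u x‖ₑ ≤ eLpNorm g (ENNReal.ofReal p) μ := by
    rw [← hFTC, intervalIntegral.integral_of_le zero_le_one]
    refine (enorm_integral_le_lintegral_enorm _).trans ?_
    rw [← eLpNorm_one_eq_lintegral_enorm]
    refine eLpNorm_le_eLpNorm_of_exponent_le ?_ hgm
    rw [ENNReal.one_le_ofReal]
    exact hp.le
  have hconv : ∀ a : ℝ, ENNReal.ofReal (|a| ^ p) = ‖a‖ₑ ^ p := fun a => by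
    rw [← ENNReal.ofReal_rpow_of_nonneg (abs_nonneg a) hp0.le, ← Real.norm_eq_abs,
      ofReal_norm]
  simp only [hconv]
  calc ‖u (x + h) - u x‖ₑ ^ p ≤ eLpNorm g (ENNReal.ofReal p) μ ^ p := by gcongr
    _ = ∫⁻ t, ‖g t‖ₑ ^ p ∂μ := by
      rw [eLpNorm_eq_lintegral_rpow_enorm_toReal (by simpa using hp0) ENNReal.ofReal_ne_top,
        ENNReal.toReal_ofReal hp0.le, ← ENNReal.rpow_mul, one_div, inv_mul_cancel₀ hp0.ne',
        ENNReal.rpow_one]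

/-- Two values at relative distance `q < 1` have comparable powers, whatever the sign of the
exponent. -/
theorem rpow_neg_le_of_abs_sub_le {a b q β : ℝ} (ha : 0 < a) (hq0 : 0 ≤ q)
    (hq1 : q < 1) (h : |b - a| ≤ q * a) :
    a ^ (-β) ≤ ((1 + q) / (1 - q)) ^ |β| * b ^ (-β) := by
  obtain ⟨h1, h2⟩ := abs_le.1 h
  have hq : 0 < 1 - q := by linarith
  have hb : 0 < b := by nlinarith
  set R := (1 + q) / (1 - q) with hR
  have hR1 : 1 + q ≤ R := by
    rw [hR, le_div_iff₀ hq]; nlinarith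
  have hRq : R * (1 - q) = 1 + q := div_mul_cancel₀ _ hq.ne'
  have hR0 : 0 < R := by linarith
  have hba : b ≤ R * a := by nlinarith
  have hab : a ≤ R * b := by nlinarith
  rcases le_total 0 β with hβ | hβ
  · rw [abs_of_nonneg hβ, Real.rpow_neg ha.le, Real.rpow_neg hb.le, ← div_eq_mul_inv,
      inv_le_iff_one_le_mul₀ (Real.rpow_pos_of_pos ha β), div_mul_eq_mul_div,
      one_le_div (Real.rpow_pos_of_pos hb β), ← Real.mul_rpow hR0.le ha.le]
    exact Real.rpow_le_rpow hb.le hba hβ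
  · rw [abs_of_nonpos hβ, ← Real.mul_rpow hR0.le hb.le]
    exact Real.rpow_le_rpow ha.le hab (by linarith)

/-- The energy bound for a continuous weight that is comparable, with constant `R`, at `x` and
at every point of `ball x (δ η(x))`: Tonelli's theorem puts the `x`-integral innermost, where the
change of variables applies, and afterwards the `s`-integral innermost, where the moment formula
applies. -/
theorem nlEnergy_le_of_weight {d : ℕ} (hd : 1 ≤ d) {p β δ R : ℝ} (hp : 1 < p) (hδ : 0 < δ)
    (hδ1 : δ < 1) (hR : 0 ≤ R) {Ω : Set (Euc d)} (hΩ : IsOpen Ω)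
    (hη : ∀ x ∈ Ω, 0 < etaD Ω x) {γ : Euc d → ℝ} (hγ : Continuous γ)
    (hγpos : ∀ x ∈ Ω, 0 < γ x)
    (hw : ∀ x ∈ Ω, ∀ z ∈ ball x (δ * etaD Ω x), γ x ^ (-β) ≤ R * γ z ^ (-β))
    {u : Euc d → ℝ} (hu : ContDiffOn ℝ 1 u Ω) :
    nlEnergy d Ω γ p β δ u ≤ ENNReal.ofReal (1 / (1 - δ) * R) *
      ∫⁻ x in Ω, ENNReal.ofReal (‖fderivWithin ℝ u Ω x‖ ^ p * γ x ^ (-β)) := by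
  have hηlip : LipschitzWith 1 (etaD Ω) := lipschitz_infDist_pt _
  have hηmeas : Measurable (etaD Ω) := hηlip.continuous.measurable
  have hsub : ∀ x ∈ Ω, ball x (δ * etaD Ω x) ⊆ Ω := fun x hx =>
    (ball_subset_ball (mul_le_of_le_one_left (hη x hx).le hδ1.le)).trans (ball_infDist_frontier_subset hx)
  have hmem : ∀ x ∈ Ω, ∀ s ∈ ball (0 : Euc d) 1, ∀ t ∈ Icc (0 : ℝ) 1,
      x + etaD Ω x • (δ * t) • s ∈ ball x (δ * etaD Ω x) := by
    intro x hx s hs t ht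
    rw [mem_ball_zero_iff] at hs
    have h0 := hη x hx
    rw [mem_ball, dist_self_add_left, norm_smul, norm_smul, Real.norm_of_nonneg h0.le,
      Real.norm_of_nonneg (mul_nonneg hδ.le ht.1)]
    have h1 : t * ‖s‖ < 1 := by nlinarith [norm_nonneg s, ht.1, ht.2]
    have h2 : 0 < etaD Ω x * δ := by positivity
    nlinarith
  -- `H z s` is the weighted directional derivative at `z` in direction `s`
  set H : Euc d → Euc d → ℝ≥0∞ := fun z s =>
    ENNReal.ofReal (γ z ^ (-β)) * ENNReal.ofReal (|fderiv ℝ u z s| ^ p) with hH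
  have hHm : Measurable (fun q : Euc d × Euc d => H q.1 q.2) := by
    have h1 : Measurable fun q : Euc d × Euc d => fderiv ℝ u q.1 q.2 :=
      (isBoundedBilinearMap_apply (𝕜 := ℝ) (E := Euc d) (F := ℝ)).continuous.measurable.comp
        (((measurable_fderiv ℝ u).comp measurable_fst).prodMk measurable_snd)
    have h2 := hγ.measurable
    simp only [hH]
    fun_prop
  have hinner : ∀ x ∈ Ω, ∫⁻ y in ball x (δ * etaD Ω x),
      ENNReal.ofReal (γ x ^ (-β) * |u y - u x| ^ p / (δ * etaD Ω x) ^ ((d : ℝ) + p)) ≤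
      ∫⁻ s in ball (0 : Euc d) 1, ∫⁻ t in Ioc (0 : ℝ) 1,
        ENNReal.ofReal R * H (x + etaD Ω x • (δ * t) • s) s := by
    intro x hx
    set r := δ * etaD Ω x with hr
    have hr0 : 0 < r := mul_pos hδ (hη x hx)
    have hγx := hγpos x hx
    rw [lintegral_ball_eq x hr0, ← lintegral_const_mul' _ _ ENNReal.ofReal_ne_top]
    refine setLIntegral_mono' measurableSet_ball fun s hs => ?_
    have hpt : ∀ t : ℝ, x + t • r • s = x + etaD Ω x • (δ * t) • s := fun t => by
      rw [smul_smul, smul_smul, hr]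
      congr 2
      ring
    have hJ := abs_sub_rpow_le_lintegral hΩ hu hp (x := x) (h := r • s) fun t ht => by
      rw [hpt]
      exact hsub x hx (hmem x hx s hs t ht)
    have hsplit : ENNReal.ofReal (r ^ d) *
        ENNReal.ofReal (γ x ^ (-β) * |u (x + r • s) - u x| ^ p / r ^ ((d : ℝ) + p)) =
        ENNReal.ofReal (γ x ^ (-β) * (r ^ p)⁻¹) *
          ENNReal.ofReal (|u (x + r • s) - u x| ^ p) := by
      rw [← ENNReal.ofReal_mul (by positivity), ← ENNReal.ofReal_mul (by positivity)]
      congr 1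
      rw [Real.rpow_add hr0, Real.rpow_natCast]
      have := (Real.rpow_pos_of_pos hr0 p).ne'
      field_simp
    rw [hsplit]
    refine (mul_le_mul_right hJ _).trans ?_
    rw [← lintegral_const_mul' _ _ ENNReal.ofReal_ne_top]
    refine setLIntegral_mono' measurableSet_Ioc fun t ht => ?_
    have hz := hmem x hx s hs t ⟨ht.1.le, ht.2⟩
    rw [hpt]
    set z := x + etaD Ω x • (δ * t) • s
    have hγz := hγpos z (hsub x hx hz)
    simp only [hH]
    rw [← ENNReal.ofReal_mul (by positivity), ← ENNReal.ofReal_mul (by positivity),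
      ← ENNReal.ofReal_mul hR]
    refine ENNReal.ofReal_le_ofReal ?_
    rw [map_smul, smul_eq_mul, abs_mul, abs_of_pos hr0, Real.mul_rpow hr0.le (abs_nonneg _)]
    have := (Real.rpow_pos_of_pos hr0 p).ne'
    calc γ x ^ (-β) * (r ^ p)⁻¹ * (r ^ p * |fderiv ℝ u z s| ^ p)
        = γ x ^ (-β) * |fderiv ℝ u z s| ^ p := by field_simp
      _ ≤ (R * γ z ^ (-β)) * |fderiv ℝ u z s| ^ p := by
          gcongr
          exact hw x hx z hz
      _ = _ := by ring
  have hHm3 : Measurable (fun q : (Euc d × Euc d) × ℝ =>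
      ENNReal.ofReal R * H (q.1.1 + etaD Ω q.1.1 • (δ * q.2) • q.1.2) q.1.2) := by
    refine Measurable.const_mul (hHm.comp (Measurable.prodMk ?_ (by fun_prop))) _
    fun_prop
  have hshift : ∀ s ∈ ball (0 : Euc d) 1, ∀ t ∈ Ioc (0 : ℝ) 1,
      ∫⁻ x in Ω, ENNReal.ofReal R * H (x + etaD Ω x • (δ * t) • s) s ≤
      ENNReal.ofReal (1 / (1 - δ) * R) * ∫⁻ z in Ω, H z s := by
    intro s hs t ht
    have hv : ‖(δ * t) • s‖ ≤ δ := by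
      rw [mem_ball_zero_iff] at hs
      rw [norm_smul, Real.norm_of_nonneg (mul_nonneg hδ.le ht.1.le)]
      have h1 : t * ‖s‖ ≤ 1 := by nlinarith [norm_nonneg s, ht.1, ht.2]
      nlinarith
    have h := lintegral_comp_shift_le hΩ.measurableSet hηlip hδ1 hv
      (fun x hx => hsub x hx (hmem x hx s hs t ⟨ht.1.le, ht.2⟩)) (fun z => H z s)
    rw [lintegral_const_mul' _ _ ENNReal.ofReal_ne_top, ENNReal.ofReal_mul' hR,
      mul_comm (ENNReal.ofReal (1 / (1 - δ))), mul_assoc]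
    gcongr
  have htotal : ∫⁻ x in Ω, ∫⁻ s in ball (0 : Euc d) 1, ∫⁻ t in Ioc (0 : ℝ) 1,
        ENNReal.ofReal R * H (x + etaD Ω x • (δ * t) • s) s ≤
      ENNReal.ofReal (1 / (1 - δ) * R) *
        ∫⁻ z in Ω, ∫⁻ s in ball (0 : Euc d) 1, H z s := by
    rw [lintegral_lintegral_swap hHm3.lintegral_prod_right'.aemeasurable,
      lintegral_lintegral_swap (f := H) hHm.aemeasurable,
      ← lintegral_const_mul' _ _ ENNReal.ofReal_ne_top]
    refine setLIntegral_mono' measurableSet_ball fun s hs => ?_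
    rw [lintegral_lintegral_swap]
    · calc _ ≤ ∫⁻ t in Ioc (0 : ℝ) 1,
            ENNReal.ofReal (1 / (1 - δ) * R) * ∫⁻ z in Ω, H z s :=
            setLIntegral_mono' measurableSet_Ioc fun t ht => hshift s hs t ht
        _ = _ := by simp
    · refine Measurable.aemeasurable ?_
      exact hHm3.comp (g := fun q : (Euc d × Euc d) × ℝ => _)
        (f := fun q : Euc d × ℝ => ((q.1, s), q.2)) (by fun_prop)
  have hmoment : ∀ z ∈ Ω, ENNReal.ofReal (normC d p) * ∫⁻ s in ball (0 : Euc d) 1, H z s =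
      ENNReal.ofReal (‖fderivWithin ℝ u Ω z‖ ^ p * γ z ^ (-β)) := by
    intro z hz
    simp only [hH]
    rw [lintegral_const_mul' _ _ ENNReal.ofReal_ne_top, mul_left_comm,
      normC_mul_lintegral_ball_clm hd hp, fderivWithin_of_isOpen hΩ hz, mul_comm,
      ← ENNReal.ofReal_mul (by positivity)]
  calc nlEnergy d Ω γ p β δ u
      ≤ ENNReal.ofReal (normC d p) * (ENNReal.ofReal (1 / (1 - δ) * R) *
          ∫⁻ z in Ω, ∫⁻ s in ball (0 : Euc d) 1, H z s) := by
        refine mul_le_mul_right ((setLIntegral_mono' hΩ.measurableSet hinner).trans htotal) _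
    _ = _ := by
        rw [mul_left_comm, ← lintegral_const_mul' _ _ ENNReal.ofReal_ne_top]
        congr 1
        exact setLIntegral_congr_fun hΩ.measurableSet hmoment

/-- Removed points are boundary points: for `d ≥ 1` the complement of a finite set is dense, so
`Ω \ Γ` and `Ω` have the same closure. -/
theorem subset_frontier_diff_finite {d : ℕ} (hd : 1 ≤ d) {Ω Γ : Set (Euc d)} (hΩ : IsOpen Ω)
    (hΓ : Γ.Finite) (hΓΩ : Γ ⊆ closure Ω) : Γ ⊆ frontier (Ω \ Γ) := by
  have : Nonempty (Fin d) := ⟨⟨0, hd⟩⟩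
  intro x hx
  rw [(hΩ.sdiff hΓ.isClosed).frontier_eq]
  refine ⟨?_, fun h => h.2 hx⟩
  have hdense : Dense Γᶜ := by
    simpa [compl_eq_univ_sdiff] using (dense_univ (X := Euc d)).sdiff_finite hΓ
  rw [sdiff_eq, hdense.open_subset_closure_inter hΩ |> fun h =>
    (closure_minimal h isClosed_closure).antisymm' (closure_mono inter_subset_left)]
  exact hΓΩ hx

/-- **Embedding of the weighted Sobolev space into the nonlocal space.** With `κ := κ₀²κ₁`,
for every `δ ∈ (0, 1/(3κ))` and every `C¹` function `u` on `Ω`,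
`[u]_{𝔚^p[δ](Ω;β)}^p ≤ (1/(1-δ)) ((1+κδ)/(1-κδ))^{|β|} ∫_Ω |∇u(x)|^p γ(x)^{-β} dx`. -/
theorem stmt6 (d : ℕ) (hd : 1 ≤ d) (p β κ₀ κ₁ κ : ℝ) (hp : 1 < p)
    (hκ₀ : 1 ≤ κ₀) (hκ₁ : 1 ≤ κ₁) (hκ : κ = κ₀ ^ 2 * κ₁)
    (Ωstar Γ : Set (Euc d)) (hΩopen : IsOpen Ωstar) (hΩbdd : Bornology.IsBounded Ωstar)
    (hΓfin : Γ.Finite) (hΓne : Γ.Nonempty) (hΓsub : Γ ⊆ closure Ωstar)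
    (γ : Euc d → ℝ) (hγpos : ∀ x ∈ Ωstar \ Γ, 0 < γ x)
    (hγlip : LipschitzOnWith (Real.toNNReal κ₁) γ (Ωstar \ Γ))
    (hγdist : ∀ x ∈ Ωstar \ Γ, Metric.infDist x Γ ≤ κ₀ * γ x)
    (δ : ℝ) (hδ : 0 < δ) (hδ' : δ < 1 / (3 * κ))
    (u : Euc d → ℝ) (hu : ContDiffOn ℝ 1 u (Ωstar \ Γ)) :
    nlEnergy d (Ωstar \ Γ) γ p β δ u ≤
      ENNReal.ofReal (1 / (1 - δ) * ((1 + κ * δ) / (1 - κ * δ)) ^ |β|) *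
        ∫⁻ x in Ωstar \ Γ,
          ENNReal.ofReal (‖fderivWithin ℝ u (Ωstar \ Γ) x‖ ^ p * γ x ^ (-β)) := by
  have hκ0 : κ₀ * κ₁ ≤ κ := by
    rw [hκ]; nlinarith [mul_nonneg (sub_nonneg.2 hκ₀) (by positivity : 0 ≤ κ₀ * κ₁)]
  have hκ1 : 1 ≤ κ := (one_le_mul_of_one_le_of_one_le hκ₀ hκ₁).trans hκ0
  have hκδ : κ * δ < 1 := by
    rw [lt_div_iff₀ (by positivity)] at hδ'
    nlinarith
  have hδ1 : δ < 1 := by nlinarith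
  have hΩ : IsOpen (Ωstar \ Γ) := hΩopen.sdiff hΓfin.isClosed
  have hΓfr := subset_frontier_diff_finite hd hΩopen hΓfin hΓsub
  have hη : ∀ x ∈ Ωstar \ Γ, 0 < etaD (Ωstar \ Γ) x := fun x hx =>
    (isClosed_frontier.notMem_iff_infDist_pos (hΓne.mono hΓfr)).1 fun h =>
      Set.disjoint_left.1 (disjoint_frontier_iff_isOpen.2 hΩ) h hx
  have hηγ : ∀ x ∈ Ωstar \ Γ, etaD (Ωstar \ Γ) x ≤ κ₀ * γ x := fun x hx =>
    (infDist_le_infDist_of_subset hΓfr hΓne).trans (hγdist x hx)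
  -- only the values of `γ` on `Ω` matter; a Lipschitz extension makes it measurable
  obtain ⟨γ', hγ'lip, hγ'⟩ := hγlip.extend_real
  have hL : nlEnergy d (Ωstar \ Γ) γ p β δ u = nlEnergy d (Ωstar \ Γ) γ' p β δ u := by
    unfold nlEnergy
    congr 1
    refine setLIntegral_congr_fun hΩ.measurableSet fun x hx => ?_
    simp only [hγ' hx]
  have hRt : ∫⁻ x in Ωstar \ Γ,
        ENNReal.ofReal (‖fderivWithin ℝ u (Ωstar \ Γ) x‖ ^ p * γ x ^ (-β)) =
      ∫⁻ x in Ωstar \ Γ,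
        ENNReal.ofReal (‖fderivWithin ℝ u (Ωstar \ Γ) x‖ ^ p * γ' x ^ (-β)) := by
    refine setLIntegral_congr_fun hΩ.measurableSet fun x hx => ?_
    simp only [hγ' hx]
  rw [hL, hRt]
  refine nlEnergy_le_of_weight hd hp hδ hδ1 ?_ hΩ hη hγ'lip.continuous
    (fun x hx => hγ' hx ▸ hγpos x hx) (fun x hx z hz => ?_) hu
  · have : 0 < 1 - κ * δ := by linarith
    positivity
  · have hzΩ : z ∈ Ωstar \ Γ := ball_infDist_frontier_subset hx
      (ball_subset_ball (mul_le_of_le_one_left (hη x hx).le hδ1.le) hz)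
    rw [← hγ' hx, ← hγ' hzΩ]
    refine rpow_neg_le_of_abs_sub_le (hγpos x hx) (by positivity) hκδ ?_
    have h := hγlip.dist_le_mul z hzΩ x hx
    rw [Real.dist_eq, Real.coe_toNNReal _ (by linarith)] at h
    calc |γ z - γ x| ≤ κ₁ * dist z x := h
      _ ≤ κ₁ * (δ * (κ₀ * γ x)) := by
          gcongr
          exact (mem_ball.1 hz).le.trans (by gcongr; exact hηγ x hx)
      _ = (κ₀ * κ₁) * (δ * γ x) := by ring
      _ ≤ κ * (δ * γ x) := by
          have := hγpos x hx
          gcongr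
      _ = κ * δ * γ x := by ring

end
end

section
/- Assume the domain, weight, localization and mollifier setting below with d ≥ 1, p ∈ (1,∞), and β ∈ ℝ. Then there exists a constant C₀, depending only on d, p, β, ψ, κ₀ and κ₁, such that for every δ ∈ (0, 1/(3κ₀²κ₁)) and every measurable u : Ω → ℝ with ∫_Ω |u(x)|^p γ(x)^{−β} dx < ∞, the integral defining K_δ u(x) converges absolutely for almost every x ∈ Ω and ( ∫_Ω |K_δ u(x)|^p γ(x)^{−β} dx )^{1/p} ≤ C₀ ( ∫_Ω |u(x)|^p γ(x)^{−β} dx )^{1/p}. -/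
/-!
The operator `K_δ` is dominated by the positive integral operator on `Ω` with kernel
`k x y = M (δ λ(x))^{-d}` for `|y - x| < δ λ(x)`, and `0` otherwise, where `M` bounds `ψ`. Its
weighted `L^p` bound is an instance of Schur's test (`schur_weighted`).

Three facts about pairs `x, y ∈ Ω` with `|y - x| < δ λ(x)` feed the test. Every `z ∈ Γ` lies on
`∂Ω`, because removing finitely many points does not change the closure of an open set in
dimension `d ≥ 1`; hence `η(x) ≤ dist(x, Γ) ≤ κ₀ γ(x)`, and the smallness of `δ` together with
the Lipschitz bounds shows that `λ(x), λ(y)` and likewise `γ(x), γ(y)` are comparable up to a factor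
`2`. Comparability of `λ` bounds both marginals of `k` by multiples of the volume of the unit
ball, and comparability of `γ` allows `γ(x)^{-β}` to be exchanged for `γ(y)^{-β}`.
Absolute convergence holds at every `x ∈ Ω`, by Hölder's inequality against the same kernel.
-/


open MeasureTheory Metric Set Filter
open scoped ENNReal NNReal Topology

noncomputable section

/-- The boundary-localized convolution
`K_δ u(x) := ∫_Ω λ_δ(x)^{-d} ψ(|y-x|/λ_δ(x)) u(y) dy`, where `λ_δ(x) = δ·λ(x)`. -/
def Kconv (d : ℕ) (Ω : Set (Euc d)) (lam : Euc d → ℝ) (ψ : ℝ → ℝ) (δ : ℝ)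
    (u : Euc d → ℝ) (x : Euc d) : ℝ :=
  ∫ y in Ω, ψ (‖y - x‖ / (δ * lam x)) / (δ * lam x) ^ d * u y

/-! ### Positive kernels on weighted `L^p` -/

/-- Hölder's inequality (Jensen's, up to normalization) for the measure with density `k`. -/
lemma lintegral_kernel_rpow_le {α : Type*} [MeasurableSpace α] (μ : Measure α) {p : ℝ} (hp : 1 < p)
    {k f : α → ℝ≥0∞} (hk : Measurable k) (hf : Measurable f) :
    (∫⁻ y, k y * f y ∂μ) ^ p ≤ (∫⁻ y, k y ∂μ) ^ (p - 1) * ∫⁻ y, k y * f y ^ p ∂μ := by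
  have hp0 : 0 < p := by linarith
  have hinv : p⁻¹ < 1 := inv_lt_one_of_one_lt₀ hp
  have h := ENNReal.lintegral_mul_norm_pow_le (μ := μ) (f := k) (g := fun y => k y * f y ^ p)
    hk.aemeasurable (hk.mul (hf.pow_const p)).aemeasurable
    (p := 1 - p⁻¹) (q := p⁻¹) (by linarith) (by positivity) (by ring)
  have e : ∀ y, k y ^ (1 - p⁻¹) * (k y * f y ^ p) ^ p⁻¹ = k y * f y := by
    intro y
    rw [ENNReal.mul_rpow_of_nonneg _ _ (by positivity), ENNReal.rpow_rpow_inv hp0.ne', ← mul_assoc,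
      ← ENNReal.rpow_add_of_nonneg _ _ (by linarith) (by positivity)]
    simp
  simp only [e] at h
  calc _ ≤ ((∫⁻ y, k y ∂μ) ^ (1 - p⁻¹) * (∫⁻ y, k y * f y ^ p ∂μ) ^ p⁻¹) ^ p := by gcongr
    _ = _ := by
      rw [ENNReal.mul_rpow_of_nonneg _ _ hp0.le, ENNReal.rpow_inv_rpow hp0.ne', ← ENNReal.rpow_mul]
      congr 2
      field_simp

/-- Schur's test with a weight `w` that is comparable at any two points the kernel connects. -/
lemma schur_weighted {α : Type*} [MeasurableSpace α] (μ : Measure α) [SFinite μ] {p : ℝ}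
    (hp : 1 < p) {k : α → α → ℝ≥0∞} {f w : α → ℝ≥0∞} (hk : Measurable (Function.uncurry k))
    (hf : Measurable f) (hw : Measurable w) {S : Set α} (hS : ∀ᵐ x ∂μ, x ∈ S) {A B G : ℝ≥0∞}
    (hA : ∀ x ∈ S, ∫⁻ y, k x y ∂μ ≤ A) (hB : ∀ y ∈ S, ∫⁻ x, k x y ∂μ ≤ B)
    (hG : ∀ x ∈ S, ∀ y ∈ S, k x y * w x ≤ k x y * (G * w y)) :
    ∫⁻ x, (∫⁻ y, k x y * f y ∂μ) ^ p * w x ∂μ ≤ A ^ (p - 1) * B * G * ∫⁻ y, f y ^ p * w y ∂μ := by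
  have hk1 : ∀ x, Measurable (k x) := fun x => hk.comp measurable_prodMk_left
  have hk2 : ∀ y, Measurable (fun x => k x y) := fun y => hk.comp measurable_prodMk_right
  calc ∫⁻ x, (∫⁻ y, k x y * f y ∂μ) ^ p * w x ∂μ
      ≤ ∫⁻ x, ∫⁻ y, A ^ (p - 1) * (k x y * (G * (f y ^ p * w y))) ∂μ ∂μ := by
        refine lintegral_mono_ae (hS.mono fun x hx => ?_)
        calc _ ≤ (A ^ (p - 1) * ∫⁻ y, k x y * f y ^ p ∂μ) * w x := by
              gcongr
              refine (lintegral_kernel_rpow_le μ hp (hk1 x) hf).trans (mul_le_mul_left ?_ _)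
              exact ENNReal.rpow_le_rpow (hA x hx) (by linarith)
          _ = ∫⁻ y, A ^ (p - 1) * (k x y * f y ^ p) * w x ∂μ := by
              have h1 : Measurable (fun y => k x y * f y ^ p) := (hk1 x).mul (hf.pow_const p)
              rw [lintegral_mul_const _ (h1.const_mul _), lintegral_const_mul _ h1]
          _ ≤ _ := by
              refine lintegral_mono_ae (hS.mono fun y hy => ?_)
              calc _ = A ^ (p - 1) * f y ^ p * (k x y * w x) := by ring
                _ ≤ A ^ (p - 1) * f y ^ p * (k x y * (G * w y)) :=
                  mul_le_mul_right (hG x hx y hy) _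
                _ = _ := by ring
    _ = ∫⁻ y, ∫⁻ x, A ^ (p - 1) * (k x y * (G * (f y ^ p * w y))) ∂μ ∂μ := by
        apply lintegral_lintegral_swap
        have h2 : Measurable (fun z : α × α => G * (f z.2 ^ p * w z.2)) :=
          (((hf.pow_const p).mul hw).const_mul G).comp measurable_snd
        exact ((hk.mul h2).const_mul _).aemeasurable
    _ ≤ ∫⁻ y, A ^ (p - 1) * B * G * (f y ^ p * w y) ∂μ := by
        refine lintegral_mono_ae (hS.mono fun y hy => ?_)
        rw [lintegral_const_mul _ ((hk2 y).mul_const _), lintegral_mul_const _ (hk2 y)]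
        calc _ ≤ A ^ (p - 1) * (B * (G * (f y ^ p * w y))) := by gcongr; exact hB y hy
          _ = _ := by ring
    _ = _ := lintegral_const_mul _ ((hf.pow_const p).mul hw)

/-! ### Balls, weights and the boundary -/

/-- Both marginals of the kernel are estimated this way: as functions of one variable they are
bounded by `a` and supported in a ball of radius `r`, with `a * r ^ d` independent of scale. -/
lemma lintegral_le_of_ball {d : ℕ} {S : Set (Euc d)} (hS : MeasurableSet S) {g : Euc d → ℝ≥0∞}
    {x : Euc d} {a r c : ℝ} (ha : 0 ≤ a) (hr : 0 < r) (hc : a * r ^ d ≤ c)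
    (h0 : ∀ y ∈ S, y ∉ ball x r → g y = 0) (h1 : ∀ y ∈ S, y ∈ ball x r → g y ≤ ENNReal.ofReal a) :
    ∫⁻ y in S, g y ≤ ENNReal.ofReal (c * (volume (ball (0 : Euc d) 1)).toReal) := by
  have hvol : volume (ball x r) = ENNReal.ofReal (r ^ d) * volume (ball (0 : Euc d) 1) := by
    simpa using Measure.addHaar_ball_of_pos volume x hr
  calc ∫⁻ y in S, g y ≤ ∫⁻ y in S, (ball x r).indicator (fun _ => ENNReal.ofReal a) y := by
        refine setLIntegral_mono' hS fun y hy => ?_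
        by_cases h : y ∈ ball x r
        · simpa [h] using h1 y hy h
        · simp [h, h0 y hy h]
    _ ≤ ∫⁻ y, (ball x r).indicator (fun _ => ENNReal.ofReal a) y := setLIntegral_le_lintegral _ _
    _ = ENNReal.ofReal (a * r ^ d * (volume (ball (0 : Euc d) 1)).toReal) := by
        rw [lintegral_indicator measurableSet_ball, setLIntegral_const,
          hvol, ENNReal.ofReal_mul (by positivity), ENNReal.ofReal_mul ha,
          ENNReal.ofReal_toReal measure_ball_lt_top.ne, mul_assoc]
    _ ≤ _ := by gcongr

/-- Powers of comparable positive numbers are comparable, whatever the sign of the exponent. -/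
lemma rpow_neg_le_of_comparable {s t β : ℝ} (hs : 0 < s) (ht : 0 < t) (h1 : s ≤ 2 * t)
    (h2 : t ≤ 2 * s) : s ^ (-β) ≤ 2 ^ |β| * t ^ (-β) := by
  rcases le_total 0 β with h | h
  · rw [abs_of_nonneg h, Real.rpow_neg hs.le, Real.rpow_neg ht.le]
    have := Real.rpow_le_rpow ht.le h2 h
    rw [Real.mul_rpow (by norm_num) hs.le] at this
    have h3 := Real.rpow_pos_of_pos hs β
    have h4 := Real.rpow_pos_of_pos ht β
    rw [← div_eq_mul_inv, le_div_iff₀ h4, inv_mul_le_iff₀ h3]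
    linarith
  · rw [abs_of_nonpos h, ← Real.mul_rpow (by norm_num) ht.le]
    exact Real.rpow_le_rpow hs.le h1 (by linarith)

/-- A finite set in the closure of an open set lies on the boundary of the open set minus it. -/
lemma finite_subset_frontier {d : ℕ} (hd : 1 ≤ d) {U Γ : Set (Euc d)} (hU : IsOpen U)
    (hΓ : Γ.Finite) (hsub : Γ ⊆ closure U) : Γ ⊆ frontier (U \ Γ) := by
  have : Nonempty (Fin d) := ⟨⟨0, hd⟩⟩
  have hdense : Dense (Γᶜ) := hΓ.countable.dense_compl ℝ
  intro z hz
  rw [(hU.sdiff hΓ.isClosed).frontier_eq]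
  refine ⟨?_, fun h => h.2 hz⟩
  have := hdense.open_subset_closure_inter hU
  rw [sdiff_eq]
  exact closure_minimal this isClosed_closure (hsub hz)

/-! ### The localized convolution -/

/-- **Weighted `L^p` boundedness of boundary-localized convolution.** There is a constant
`C₀` depending only on `d, p, β, ψ, κ₀, κ₁` such that for every admissible setting, every
`δ ∈ (0, 1/(3κ₀²κ₁))`, and every measurable `u` with `∫_Ω |u|^p γ^{-β} < ∞`, the integral
defining `K_δ u(x)` converges absolutely for a.e. `x ∈ Ω`, and
`‖K_δ u‖_{L^p(Ω;β)} ≤ C₀ ‖u‖_{L^p(Ω;β)}`. -/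
theorem stmt7 (d : ℕ) (hd : 1 ≤ d) (p β κ₀ κ₁ : ℝ) (hp : 1 < p)
    (hκ₀ : 1 ≤ κ₀) (hκ₁ : 1 ≤ κ₁)
    (ψ : ℝ → ℝ) (hψnn : ∀ x, 0 ≤ ψ x) (hψmeas : Measurable ψ)
    (hψbdd : ∃ M : ℝ, ∀ x, ψ x ≤ M) (hψeven : ∀ x, ψ (-x) = ψ x)
    (hψmono : AntitoneOn ψ (Set.Ici 0)) (hψsupp : ∀ x : ℝ, 1 ≤ |x| → ψ x = 0)
    (b cψ : ℝ) (hb : 0 < b) (hcψ : cψ ∈ Set.Ioo (0 : ℝ) 1)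
    (hψlb : ∀ x ∈ Set.Icc (0 : ℝ) cψ, b ≤ ψ x)
    (hψnorm : ∫ x : Euc d, ψ ‖x‖ = 1) :
    ∃ C₀ : ℝ, 0 < C₀ ∧
      ∀ (Ωstar Γ : Set (Euc d)), IsOpen Ωstar → Bornology.IsBounded Ωstar →
        Γ.Finite → Γ.Nonempty → Γ ⊆ closure Ωstar →
        ∀ γ lam : Euc d → ℝ,
          (∀ x ∈ Ωstar \ Γ, 0 < γ x) →
          LipschitzOnWith (Real.toNNReal κ₁) γ (Ωstar \ Γ) →
          (∀ x ∈ Ωstar \ Γ, Metric.infDist x Γ ≤ κ₀ * γ x) →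
          (∀ x ∈ Ωstar \ Γ, 0 < lam x ∧
            κ₀⁻¹ * etaD (Ωstar \ Γ) x ≤ lam x ∧ lam x ≤ κ₀ * etaD (Ωstar \ Γ) x) →
          (∀ x ∈ Ωstar \ Γ, ∀ y ∈ Ωstar \ Γ, |lam x - lam y| ≤ κ₁ * ‖x - y‖) →
          ∀ δ : ℝ, 0 < δ → δ < 1 / (3 * κ₀ ^ 2 * κ₁) →
          ∀ u : Euc d → ℝ, Measurable u →
            (∫⁻ x in Ωstar \ Γ, ENNReal.ofReal (|u x| ^ p * γ x ^ (-β))) < ⊤ →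
            (∀ᵐ x ∂(volume.restrict (Ωstar \ Γ)),
              IntegrableOn (fun y => ψ (‖y - x‖ / (δ * lam x)) / (δ * lam x) ^ d * u y)
                (Ωstar \ Γ)) ∧
            (∫⁻ x in Ωstar \ Γ,
                ENNReal.ofReal (|Kconv d (Ωstar \ Γ) lam ψ δ u x| ^ p * γ x ^ (-β))) ^ (1 / p) ≤
              ENNReal.ofReal C₀ *
                (∫⁻ x in Ωstar \ Γ, ENNReal.ofReal (|u x| ^ p * γ x ^ (-β))) ^ (1 / p) := by
  obtain ⟨M₀, hM₀⟩ := hψbdd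
  set M : ℝ := max M₀ 1 with hMdef
  have hM : ∀ x, ψ x ≤ M := fun x => (hM₀ x).trans (le_max_left _ _)
  have hM0 : 0 < M := lt_of_lt_of_le one_pos (le_max_right _ _)
  set V : ℝ := (volume (ball (0 : Euc d) 1)).toReal with hV
  have hV0 : 0 < V := ENNReal.toReal_pos (measure_ball_pos _ _ one_pos).ne' measure_ball_lt_top.ne
  have hp0 : 0 < p := by linarith
  set A : ℝ := M * V with hA
  set B : ℝ := M * 2 ^ d * V with hB
  set G : ℝ := 2 ^ |β| with hG
  have hA0 : 0 < A := by positivity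
  have hB0 : 0 < B := by positivity
  have hG0 : 0 < G := by positivity
  refine ⟨(A ^ (p - 1) * B * G) ^ (1 / p), by positivity, ?_⟩
  intro Ωstar Γ hopen hbd hfin hne hsub γ lam hγ hγlip hγdist hlam hlamlip δ hδ hδlt u hu hI
  have hΓf := finite_subset_frontier hd hopen hfin hsub
  have hΩo : IsOpen (Ωstar \ Γ) := hopen.sdiff hfin.isClosed
  set Ω : Set (Euc d) := Ωstar \ Γ with hΩ
  have hΩm : MeasurableSet Ω := hΩo.measurableSet
  have hδ3 : 3 * κ₀ ^ 2 * κ₁ * δ < 1 := by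
    rw [lt_div_iff₀ (by positivity)] at hδlt; linarith
  have hlam0 : ∀ x ∈ Ω, 0 < lam x := fun x hx => (hlam x hx).1
  have hlam_le : ∀ x ∈ Ω, lam x ≤ κ₀ ^ 2 * γ x := by
    intro x hx
    have h1 : etaD Ω x ≤ κ₀ * γ x :=
      (infDist_le_infDist_of_subset hΓf hne).trans (hγdist x hx)
    calc lam x ≤ κ₀ * etaD Ω x := (hlam x hx).2.2
      _ ≤ κ₀ * (κ₀ * γ x) := by gcongr
      _ = _ := by ring
  have hlamc : ∀ x ∈ Ω, ∀ y ∈ Ω, ‖y - x‖ < δ * lam x → 3 * |lam x - lam y| ≤ lam x := by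
    intro x hx y hy hxy
    have h1 := hlamlip x hx y hy
    rw [norm_sub_rev] at h1
    have h2 : κ₁ * ‖y - x‖ ≤ κ₁ * (δ * lam x) := by gcongr
    have h3 : 3 * (κ₁ * δ) ≤ 1 := by
      have : 1 ≤ κ₀ ^ 2 := one_le_pow₀ hκ₀
      have : 1 * (κ₁ * δ) ≤ κ₀ ^ 2 * (κ₁ * δ) := by gcongr
      linarith
    have := mul_le_mul_of_nonneg_right h3 (hlam0 x hx).le
    linarith
  have hγc : ∀ x ∈ Ω, ∀ y ∈ Ω, ‖y - x‖ < δ * lam x → 3 * |γ x - γ y| ≤ γ x := by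
    intro x hx y hy hxy
    have h1 := hγlip.dist_le_mul x hx y hy
    rw [Real.dist_eq, dist_comm, dist_eq_norm, Real.coe_toNNReal _ (by linarith)] at h1
    have h2 : κ₁ * ‖y - x‖ ≤ κ₁ * (δ * (κ₀ ^ 2 * γ x)) := by
      gcongr
      exact hxy.le.trans (by gcongr; exact hlam_le x hx)
    have := mul_le_mul_of_nonneg_right hδ3.le (hγ x hx).le
    linarith
  classical
  -- Zero extensions off `Ω`, which are measurable on the whole space.
  set lam' : Euc d → ℝ := Ω.indicator lam with hlam'
  set γ' : Euc d → ℝ := Ω.indicator γ with hγ'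
  have hlamE : ∀ x ∈ Ω, lam' x = lam x := fun x hx => indicator_of_mem hx _
  have hγE : ∀ x ∈ Ω, γ' x = γ x := fun x hx => indicator_of_mem hx _
  have hlamcont : ContinuousOn lam Ω := by
    refine (LipschitzOnWith.of_dist_le_mul (K := Real.toNNReal κ₁) ?_).continuousOn
    intro x hx y hy
    rw [Real.dist_eq, dist_eq_norm, Real.coe_toNNReal _ (by linarith)]
    exact hlamlip x hx y hy
  have hlamm : Measurable lam' := by
    have h : Measurable (Ω.piecewise lam 0) :=
      hlamcont.measurable_piecewise continuousOn_const hΩm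
    rwa [piecewise_eq_indicator] at h
  have hγm : Measurable γ' := by
    have h : Measurable (Ω.piecewise γ 0) :=
      hγlip.continuousOn.measurable_piecewise continuousOn_const hΩm
    rwa [piecewise_eq_indicator] at h
  set k : Euc d → Euc d → ℝ≥0∞ := fun x y =>
    if ‖y - x‖ < δ * lam' x then ENNReal.ofReal (M / (δ * lam' x) ^ d) else 0 with hk
  have hkm : Measurable (Function.uncurry k) := by
    have h1 : Measurable (fun z : Euc d × Euc d => lam' z.1) := hlamm.comp measurable_fst
    refine Measurable.ite (measurableSet_lt (by fun_prop) (h1.const_mul δ)) ?_ measurable_const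
    exact (((h1.const_mul δ).pow_const d).const_div M).ennreal_ofReal
  have hkE : ∀ x ∈ Ω, ∀ y, k x y =
      if ‖y - x‖ < δ * lam x then ENNReal.ofReal (M / (δ * lam x) ^ d) else 0 := by
    intro x hx y
    simp only [hk, hlamE x hx]
  clear_value k
  set f : Euc d → ℝ≥0∞ := fun y => ENNReal.ofReal |u y| with hf
  have hfm : Measurable f := by
    simpa only [hf, Real.norm_eq_abs] using hu.norm.ennreal_ofReal
  set w : Euc d → ℝ≥0∞ := fun y => ENNReal.ofReal (γ' y ^ (-β)) with hw
  have hwm : Measurable w := (hγm.pow_const _).ennreal_ofReal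
  have hkA : ∀ x ∈ Ω, ∫⁻ y in Ω, k x y ≤ ENNReal.ofReal A := by
    intro x hx
    have hr : 0 < δ * lam x := mul_pos hδ (hlam0 x hx)
    refine lintegral_le_of_ball (x := x) (a := M / (δ * lam x) ^ d) (r := δ * lam x) hΩm
      (by positivity) hr (by rw [div_mul_cancel₀ _ (by positivity)]) ?_ ?_
    · intro y _ hy
      rw [hkE x hx, if_neg]
      simpa [dist_eq_norm] using hy
    · intro y _ hy
      rw [hkE x hx, if_pos]
      simpa [dist_eq_norm] using hy
  have hkB : ∀ y ∈ Ω, ∫⁻ x in Ω, k x y ≤ ENNReal.ofReal B := by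
    intro y hy
    have hr : 0 < δ * lam y := mul_pos hδ (hlam0 y hy)
    -- `3/4 λ(y) ≤ λ(x) ≤ 3/2 λ(y)` on the support, which produces the factor `2 ^ d`.
    refine lintegral_le_of_ball (x := y) (a := M / (3 / 4 * (δ * lam y)) ^ d)
      (r := 3 / 2 * (δ * lam y)) hΩm (by positivity) (by positivity) ?_ ?_ ?_
    · have : 3 / 2 * (δ * lam y) = 2 * (3 / 4 * (δ * lam y)) := by ring
      rw [this, mul_pow 2, div_mul_eq_mul_div, div_le_iff₀ (by positivity)]
      exact le_of_eq (by ring)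
    · intro x hx hxy
      rw [hkE x hx, if_neg]
      intro h
      apply hxy
      have h1 := hlamc x hx y hy h
      have h2 := le_abs_self (lam x - lam y)
      have h3 : lam x ≤ 3 / 2 * lam y := by linarith
      have h4 := mul_le_mul_of_nonneg_left h3 hδ.le
      rw [mem_ball, dist_comm, dist_eq_norm]
      linarith
    · intro x hx _
      rw [hkE x hx]
      split_ifs with h
      · have h1 := hlamc x hx y hy h
        have h2 := neg_abs_le (lam x - lam y)
        have h3 : 3 / 4 * lam y ≤ lam x := by linarith
        have h4 := mul_le_mul_of_nonneg_left h3 hδ.le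
        have h5 : 3 / 4 * (δ * lam y) ≤ δ * lam x := by linarith
        gcongr ENNReal.ofReal (M / ?_ ^ d)
      · exact zero_le
  have hkG : ∀ x ∈ Ω, ∀ y ∈ Ω, k x y * w x ≤ k x y * (ENNReal.ofReal G * w y) := by
    intro x hx y hy
    by_cases h : ‖y - x‖ < δ * lam x
    · gcongr
      simp only [hw]
      rw [← ENNReal.ofReal_mul hG0.le, hγE x hx, hγE y hy]
      apply ENNReal.ofReal_le_ofReal
      have h1 := hγc x hx y hy h
      have h2 := le_abs_self (γ x - γ y)
      have h3 := neg_abs_le (γ x - γ y)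
      have h4 := hγ x hx
      have h5 := hγ y hy
      exact rpow_neg_le_of_comparable h4 h5 (by linarith) (by linarith)
    · rw [hkE x hx, if_neg h]; simp
  have hIeq : ∫⁻ x in Ω, ENNReal.ofReal (|u x| ^ p * γ x ^ (-β)) =
      ∫⁻ x in Ω, f x ^ p * w x := by
    refine setLIntegral_congr_fun hΩm fun x hx => ?_
    simp only [hf, hw]
    rw [ENNReal.ofReal_mul (by positivity), hγE x hx,
      ENNReal.ofReal_rpow_of_nonneg (abs_nonneg _) hp0.le]
  have hdom : ∀ x ∈ Ω, ∀ y,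
      ‖ψ (‖y - x‖ / (δ * lam x)) / (δ * lam x) ^ d * u y‖ₑ ≤ k x y * f y := by
    intro x hx y
    have hr : 0 < δ * lam x := mul_pos hδ (hlam0 x hx)
    rw [enorm_mul, hkE x hx]
    have e : ‖u y‖ₑ = f y := Real.enorm_eq_ofReal_abs _
    rw [e]
    gcongr
    split_ifs with h
    · rw [Real.enorm_of_nonneg (div_nonneg (hψnn _) (by positivity))]
      gcongr
      exact hM _
    · rw [hψsupp]
      · simp
      · rw [abs_of_nonneg (by positivity), le_div_iff₀ hr]
        linarith
  have hmain := schur_weighted (volume.restrict Ω) hp hkm hfm hwm (S := Ω)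
    (ae_restrict_mem hΩm) hkA hkB hkG
  rw [hIeq] at hI ⊢
  refine ⟨?_, ?_⟩
  · refine (ae_restrict_mem hΩm).mono fun x hx => ?_
    have hr : 0 < δ * lam x := mul_pos hδ (hlam0 x hx)
    refine ⟨?_, hasFiniteIntegral_iff_enorm.2 ?_⟩
    · refine Measurable.aestronglyMeasurable ?_
      refine Measurable.mul ?_ hu
      have h1 : Measurable (fun y : Euc d => ‖y - x‖ / (δ * lam x)) :=
        (measurable_id.sub_const x).norm.div_const _
      exact (hψmeas.comp h1).div_const _
    have hle : ∫⁻ y in Ω, ‖ψ (‖y - x‖ / (δ * lam x)) / (δ * lam x) ^ d * u y‖ₑ ≤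
        ∫⁻ y in Ω, k x y * f y := lintegral_mono fun y => hdom x hx y
    refine lt_of_le_of_lt hle ?_
    have hkx : Measurable (k x) := hkm.comp measurable_prodMk_left
    have hwx0 : w x ≠ 0 := by
      simp only [hw, hγE x hx]
      exact (ENNReal.ofReal_pos.2 (Real.rpow_pos_of_pos (hγ x hx) _)).ne'
    -- Multiplication by `w x` turns the local bound into one by the global weighted integral.
    have h2 : (∫⁻ y in Ω, k x y * f y ^ p) * w x < ⊤ := by
      calc _ = ∫⁻ y in Ω, k x y * f y ^ p * w x :=
            (lintegral_mul_const _ (hkx.mul (hfm.pow_const p))).symm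
        _ ≤ ∫⁻ y in Ω, ENNReal.ofReal (M / (δ * lam x) ^ d) * ENNReal.ofReal G *
              (f y ^ p * w y) := by
            refine setLIntegral_mono' hΩm fun y hy => ?_
            calc _ = k x y * w x * f y ^ p := by ring
              _ ≤ k x y * (ENNReal.ofReal G * w y) * f y ^ p :=
                  mul_le_mul_left (hkG x hx y hy) _
              _ ≤ ENNReal.ofReal (M / (δ * lam x) ^ d) * (ENNReal.ofReal G * w y) * f y ^ p := by
                  gcongr
                  rw [hkE x hx]
                  split_ifs
                  · exact le_rfl
                  · exact zero_le
              _ = _ := by ring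
        _ = ENNReal.ofReal (M / (δ * lam x) ^ d) * ENNReal.ofReal G *
              ∫⁻ y in Ω, f y ^ p * w y := lintegral_const_mul _ ((hfm.pow_const p).mul hwm)
        _ < ⊤ := ENNReal.mul_lt_top
            (ENNReal.mul_lt_top ENNReal.ofReal_lt_top ENNReal.ofReal_lt_top) hI
    have h3 : ∫⁻ y in Ω, k x y * f y ^ p < ⊤ := ENNReal.lt_top_of_mul_ne_top_left h2.ne hwx0
    have h4 : (∫⁻ y in Ω, k x y * f y) ^ p < ⊤ := by
      refine (lintegral_kernel_rpow_le _ hp hkx hfm).trans_lt (ENNReal.mul_lt_top ?_ h3)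
      exact ENNReal.rpow_lt_top_of_nonneg (by linarith)
        ((hkA x hx).trans_lt ENNReal.ofReal_lt_top).ne
    exact (ENNReal.rpow_lt_top_iff_of_pos hp0).1 h4
  · have hK : ∫⁻ x in Ω, ENNReal.ofReal (|Kconv d Ω lam ψ δ u x| ^ p * γ x ^ (-β)) ≤
        ∫⁻ x in Ω, (∫⁻ y in Ω, k x y * f y) ^ p * w x := by
      refine setLIntegral_mono' hΩm fun x hx => ?_
      rw [ENNReal.ofReal_mul (by positivity),
        ← ENNReal.ofReal_rpow_of_nonneg (abs_nonneg _) hp0.le, ← Real.enorm_eq_ofReal_abs]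
      simp only [hw, hγE x hx]
      gcongr
      exact (enorm_integral_le_lintegral_enorm _).trans (lintegral_mono (hdom x hx))
    calc _ ≤ (ENNReal.ofReal A ^ (p - 1) * ENNReal.ofReal B * ENNReal.ofReal G *
          ∫⁻ y in Ω, f y ^ p * w y) ^ (1 / p) := by
          gcongr
          exact hK.trans hmain
      _ = _ := by
          rw [ENNReal.mul_rpow_of_nonneg _ _ (by positivity),
            ENNReal.ofReal_rpow_of_pos hA0, ← ENNReal.ofReal_mul (by positivity),
            ← ENNReal.ofReal_mul (by positivity), ENNReal.ofReal_rpow_of_pos (by positivity)]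

end
end
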